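/- The operator δ̃ on the extended odd graph complex (decorated graphs of odd type with numbered crosses on external vertices) is well defined on the quotient D̃_o, satisfies δ̃ ∘ δ̃ = 0, raises the extended degree by 1 and leaves the extended order unchanged, i.e., δ̃: D̃_o^{k,m} → D̃_o^{k,m+1}. -/

import Mathlib

open scoped Classical

/-!
# The extended odd graph complex `(D̃_o, δ̃)` of decorated graphs with crosses

We encode a decorated graph of odd type with numbered crosses on external vertices as
follows.  Its vertices are the natural numbers `0, …, ve + vi - 1`: the labels
`0, …, ve - 1` are the external vertices, placed on the distinguished oriented circle in
the (cyclically increasing) order of their labels, and the labels `ve, …, ve + vi - 1`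
are the internal vertices.  Each edge is oriented, and each external small loop carries an
ordering of its two half-edges, recorded (relative to the orientation) in the Boolean
field `lp`.  Crosses are recorded as a list of external vertex labels, the position in the
list being the (0-indexed) label of the cross.  Labels here are 0-indexed, the paper's
labels being 1-indexed.
-/

/-- A decorated oriented edge: source and target vertex labels, together with the
half-edge-ordering bit for small loops. -/
structure OEdge where
  src : ℕ
  tgt : ℕ
  lp : Bool
deriving DecidableEq

/-- A decorated graph of the extended odd graph complex: `ve` external vertices (labels
`0,…,ve-1`, lying on the oriented circle in this cyclic order), `vi` internal vertices
(labels `ve,…,ve+vi-1`), a multiset of decorated oriented edges, and a list of crosses on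
external vertices: the cross labelled `a` (0-indexed) sits at the external vertex
`crosses.get a`. -/
structure OddXGraph where
  ve : ℕ
  vi : ℕ
  edges : Multiset OEdge
  crosses : List ℕ
deriving DecidableEq

namespace OddXGraph

/-- Total number of vertices. -/
def nv (g : OddXGraph) : ℕ := g.ve + g.vi

/-- The valence of a vertex: the number of edge-ends at it. -/
def valence (g : OddXGraph) (v : ℕ) : ℕ :=
  (g.edges.map fun e => (if e.src = v then 1 else 0) + (if e.tgt = v then 1 else 0)).sum

/-- Two vertices are adjacent if joined by an edge or if both lie on the circle. -/
def adj (g : OddXGraph) (a b : ℕ) : Prop :=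
  (∃ e ∈ g.edges, (e.src = a ∧ e.tgt = b) ∨ (e.src = b ∧ e.tgt = a)) ∨
    (a < g.ve ∧ b < g.ve)

/-- Connectivity of the graph (including the distinguished circle). -/
def Connected (g : OddXGraph) : Prop :=
  ∀ a b, a < g.nv → b < g.nv → Relation.ReflTransGen g.adj a b

/-- A valid graph of the extended odd complex: edges join actual vertices, non-loop edges
carry no half-edge-ordering bit, internal vertices are at least trivalent, every external
vertex carries at least one edge-end or a cross (a crossed vertex with no edges is
allowed), crosses sit at external vertices, and the graph is connected. -/
def IsValid (g : OddXGraph) : Prop :=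
  (∀ e ∈ g.edges, e.src < g.nv ∧ e.tgt < g.nv) ∧
  (∀ e ∈ g.edges, e.src ≠ e.tgt → e.lp = false) ∧
  (∀ v, g.ve ≤ v → v < g.nv → 3 ≤ g.valence v) ∧
  (∀ v, v < g.ve → 1 ≤ g.valence v ∨ v ∈ g.crosses) ∧
  (∀ c ∈ g.crosses, c < g.ve) ∧
  g.Connected

/-- Number of edges. -/
def numEdges (g : OddXGraph) : ℕ := Multiset.card g.edges

/-- Number of crosses. -/
def numCrosses (g : OddXGraph) : ℕ := g.crosses.length

/-- The *extended order* of a graph: `e - v_i + x`. -/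
def ordX (g : OddXGraph) : ℤ := (g.numEdges : ℤ) - (g.vi : ℤ) + (g.numCrosses : ℤ)

/-- The *extended degree* of a graph: `2e - 3v_i - v_e + x`. -/
def degX (g : OddXGraph) : ℤ :=
  2 * (g.numEdges : ℤ) - 3 * (g.vi : ℤ) - (g.ve : ℤ) + (g.numCrosses : ℤ)

/-- A *regular edge*: neither a small loop nor a chord. -/
def isRegular (g : OddXGraph) (e : OEdge) : Prop :=
  e.src ≠ e.tgt ∧ ¬(e.src < g.ve ∧ e.tgt < g.ve)

/-- Two vertices joined by more than one edge. -/
def hasDoubleEdge (g : OddXGraph) : Prop :=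
  ∃ e ∈ g.edges, ∃ f ∈ g.edges.erase e,
    (f.src = e.src ∧ f.tgt = e.tgt) ∨ (f.src = e.tgt ∧ f.tgt = e.src)

/-- An internal small loop. -/
def hasInternalLoop (g : OddXGraph) : Prop :=
  ∃ e ∈ g.edges, e.src = e.tgt ∧ g.ve ≤ e.src

end OddXGraph

/-- Vertex relabelling after merging the vertices `i` and `j`: the merged vertex receives
the label `min i j`, and all labels greater than `max i j` are lowered by one. -/
def mergeMap (i j x : ℕ) : ℕ :=
  if x = i ∨ x = j then min i j else if max i j < x then x - 1 else x

namespace OddXGraph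

/-- Contraction of a regular edge `e`: the edge is removed and its end-points are merged
(crosses follow the relabelling). -/
def contractEdge (g : OddXGraph) (e : OEdge) : OddXGraph where
  ve := g.ve
  vi := g.vi - 1
  edges := (g.edges.erase e).map fun f =>
    ⟨mergeMap e.src e.tgt f.src, mergeMap e.src e.tgt f.tgt, f.lp⟩
  crosses := g.crosses.map (mergeMap e.src e.tgt)

/-- Contraction of the arc running (along the circle orientation) from the external vertex
`i` to the consecutive external vertex `j`.  A short chord joining `i` and `j` becomes an
external small loop whose half-edges are ordered consistently with the orientation of the
circle; crosses follow the relabelling. -/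
def contractArc (g : OddXGraph) (i j : ℕ) : OddXGraph where
  ve := g.ve - 1
  vi := g.vi
  edges := g.edges.map fun f =>
    if f.src = i ∧ f.tgt = j then ⟨min i j, min i j, false⟩
    else if f.src = j ∧ f.tgt = i then ⟨min i j, min i j, true⟩
    else ⟨mergeMap i j f.src, mergeMap i j f.tgt, f.lp⟩
  crosses := g.crosses.map (mergeMap i j)

/-- Deletion of the cross labelled `a`: the cross is removed and an external small loop,
whose half-edges are ordered consistently with the orientation of the circle, is attached
at its vertex. -/
def deleteCross (g : OddXGraph) (a : Fin g.crosses.length) : OddXGraph where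
  ve := g.ve
  vi := g.vi
  edges := (⟨g.crosses.get a, g.crosses.get a, false⟩ : OEdge) ::ₘ g.edges
  crosses := g.crosses.eraseIdx a

/-- The arcs of the circle, as ordered pairs of consecutive external vertices (oriented
along the circle). -/
def arcs (g : OddXGraph) : List (ℕ × ℕ) :=
  if 2 ≤ g.ve then ((List.range (g.ve - 1)).map fun i => (i, i + 1)) ++ [(g.ve - 1, 0)]
  else []

end OddXGraph

/-- The contraction sign `σ(i,j)` (0-indexed version of the paper's
`σ(i,j) = (-1)^j` for `j > i` and `(-1)^{i+1}` for `j < i`, which is stated for 1-indexed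
labels). -/
def csign (i j : ℕ) : ℝ := if i < j then (-1) ^ (j + 1) else (-1) ^ i

/-- The value of the coboundary operator `δ̃` on a single graph of the extended odd
complex: the signed sum of the contractions of all regular edges and all arcs (exactly as
for `δ_o`), plus, for every cross, the deletion of that cross with sign
`(-1)^{deg̃ Γ + a}` (`a` being the 1-indexed cross label; here the 0-indexed exponent is
`deg̃ Γ + a + 1`).  (On graphs that are `0` by the relations, the operator is extended by
`0`.) -/
noncomputable def deltaXGen (g : OddXGraph) : OddXGraph →₀ ℝ :=
  if g.IsValid ∧ ¬g.hasDoubleEdge ∧ ¬g.hasInternalLoop then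
    ((g.edges.filter fun e => g.isRegular e).map fun e =>
        csign e.src e.tgt • Finsupp.single (g.contractEdge e) (1 : ℝ)).sum
      + (g.arcs.map fun p =>
          csign p.1 p.2 • Finsupp.single (g.contractArc p.1 p.2) (1 : ℝ)).sum
      + ((List.finRange g.crosses.length).map fun a : Fin g.crosses.length =>
          ((-1 : ℝ) ^ (g.degX + (a.val : ℤ) + 1)) •
            Finsupp.single (g.deleteCross a) (1 : ℝ)).sum
  else 0

/-- The coboundary operator `δ̃` on the free vector space generated by graphs of the
extended odd complex. -/
noncomputable def deltaXFree : (OddXGraph →₀ ℝ) →ₗ[ℝ] (OddXGraph →₀ ℝ) :=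
  Finsupp.lsum ℝ fun g => LinearMap.toSpanSingleton ℝ (OddXGraph →₀ ℝ) (deltaXGen g)

/-- Relabelling of vertices by a permutation `π` of the internal labels and a cyclic
rotation by `r` of the external labels. -/
def permVertexX (ve vi : ℕ) (π : Equiv.Perm (Fin vi)) (r : ℕ) (v : ℕ) : ℕ :=
  if v < ve then (v + r) % ve
  else if h : v - ve < vi then ve + (π ⟨v - ve, h⟩ : Fin vi) else v

/-- The action of a vertex relabelling on a decorated edge. -/
def permOEdgeX (ve vi : ℕ) (π : Equiv.Perm (Fin vi)) (r : ℕ) (e : OEdge) : OEdge :=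
  ⟨permVertexX ve vi π r e.src, permVertexX ve vi π r e.tgt, e.lp⟩

/-- Reversal of the orientation of an edge (for small loops: reversal of the half-edge
ordering relative to the orientation). -/
def flipOEdgeX (e : OEdge) : OEdge :=
  if e.src = e.tgt then ⟨e.src, e.tgt, !e.lp⟩ else ⟨e.tgt, e.src, e.lp⟩

/-- `OddXRel g g' ε` holds when `g'` is obtained from `g` by a permutation of the internal
labels, a cyclic permutation of the external labels, reversals of edge orientations and of
half-edge orderings of external small loops, and a permutation `ρ` of the cross labels;
`ε = (-1)^{π₁+π₂+l+s+σ}` is the corresponding sign (`σ` being the order of `ρ`). -/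
def OddXRel (g g' : OddXGraph) (ε : ℝ) : Prop :=
  g'.ve = g.ve ∧ g'.vi = g.vi ∧
  ∃ (π : Equiv.Perm (Fin g.vi)) (r : ℕ) (F : Multiset (OEdge × Bool))
    (hc : g'.crosses.length = g.crosses.length)
    (ρ : Equiv.Perm (Fin g.crosses.length)),
    F.map Prod.fst = g.edges.map (permOEdgeX g.ve g.vi π r) ∧
    g'.edges = F.map (fun p => if p.2 then flipOEdgeX p.1 else p.1) ∧
    (∀ a : Fin g.crosses.length,
      g'.crosses.get (Fin.cast hc.symm (ρ a)) =
        permVertexX g.ve g.vi π r (g.crosses.get a)) ∧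
    ε = ((Equiv.Perm.sign π : ℤ) : ℝ)
        * ((Equiv.Perm.sign (finRotate g.ve ^ r) : ℤ) : ℝ)
        * (-1) ^ Multiset.card (F.filter fun p => p.2 = true)
        * ((Equiv.Perm.sign ρ : ℤ) : ℝ)

/-- The defining relations of `D̃_o`: non-graphs are `0`, graphs with a double edge are
`0`, graphs with an internal small loop are `0`, and graphs differing only in the
decoration are identified up to sign. -/
def oddXRelSet : Set (OddXGraph →₀ ℝ) :=
  {x | ∃ g : OddXGraph, ¬g.IsValid ∧ x = Finsupp.single g 1} ∪
  {x | ∃ g : OddXGraph, g.hasDoubleEdge ∧ x = Finsupp.single g 1} ∪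
  {x | ∃ g : OddXGraph, g.hasInternalLoop ∧ x = Finsupp.single g 1} ∪
  {x | ∃ g g' ε, OddXRel g g' ε ∧ x = Finsupp.single g 1 - ε • Finsupp.single g' 1}

/-- The submodule of relations. -/
noncomputable def oddXRelations : Submodule ℝ (OddXGraph →₀ ℝ) :=
  Submodule.span ℝ oddXRelSet

/-- The extended odd graph complex `D̃_o`. -/
abbrev DoX := (OddXGraph →₀ ℝ) ⧸ oddXRelations

/-- The subspace `D̃_o^{k,m}` of `D̃_o` spanned by the graphs of extended order `k` and
extended degree `m`. -/
noncomputable def oddXPiece (k m : ℤ) : Submodule ℝ DoX :=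
  Submodule.span ℝ {x | ∃ g : OddXGraph,
    g.IsValid ∧ g.ordX = k ∧ g.degX = m ∧
    x = Submodule.Quotient.mk (p := oddXRelations) (Finsupp.single g 1)}

lemma mergeMap_comm (i j x : ℕ) : mergeMap i j x = mergeMap j i x := by
  unfold mergeMap; split_ifs <;> omega

lemma mergeMap_of_lt {i j : ℕ} (h : i < j) (x : ℕ) :
    mergeMap i j x = if x = j then i else if j < x then x - 1 else x := by
  unfold mergeMap; split_ifs <;> omega

lemma mergeMap_of_max_lt {i j k l : ℕ} (hij : i < j) (hkl : k < l) (hjl : j < l) :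
    mergeMap k l i = i ∧ mergeMap k l j = j ∧ mergeMap i j l = l - 1 ∧ mergeMap i j k < l - 1 := by
  simp only [mergeMap_of_lt hij, mergeMap_of_lt hkl]
  refine ⟨?_, ?_, ?_, ?_⟩ <;> split_ifs <;> omega

lemma mergeMap_of_max_eq {i k l : ℕ} (hij : i < l) (hkl : k < l) :
    mergeMap k l i = i ∧ mergeMap k l l = k := by
  simp only [mergeMap_of_lt hkl]
  refine ⟨?_, ?_⟩ <;> split_ifs <;> omega

lemma mergeMap_swap_ne {i j k l : ℕ} (hij : i ≠ j) (hkl : k ≠ l)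
    (h : mergeMap i j k ≠ mergeMap i j l) : mergeMap k l i ≠ mergeMap k l j := by
  wlog h1 : i < j generalizing i j
  · exact (this hij.symm (by rwa [mergeMap_comm j i, mergeMap_comm j i]) (by omega)).symm
  wlog h2 : k < l generalizing k l
  · rw [mergeMap_comm k l, mergeMap_comm k l]
    exact this hkl.symm h.symm (by omega)
  simp only [mergeMap_of_lt h1, mergeMap_of_lt h2] at h ⊢
  split_ifs at h <;> split_ifs <;> omega

/-- Successive merging of two pairs of labels does not depend on the order. -/
lemma mergeMap_mergeMap {i j k l : ℕ} (hij : i ≠ j) (hkl : k ≠ l)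
    (h : mergeMap i j k ≠ mergeMap i j l) (v : ℕ) :
    mergeMap (mergeMap i j k) (mergeMap i j l) (mergeMap i j v) =
      mergeMap (mergeMap k l i) (mergeMap k l j) (mergeMap k l v) := by
  wlog h1 : i < j generalizing i j
  · rw [mergeMap_comm i j, mergeMap_comm i j, mergeMap_comm i j, mergeMap_comm (mergeMap k l i)]
    refine this hij.symm ?_ (by omega)
    rwa [mergeMap_comm j i, mergeMap_comm j i]
  wlog h2 : k < l generalizing k l
  · rw [mergeMap_comm k l, mergeMap_comm k l, mergeMap_comm k l, mergeMap_comm (mergeMap i j k)]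
    exact this hkl.symm h.symm (by omega)
  wlog h3 : j ≤ l generalizing i j k l
  · exact (this hkl h2 hij (mergeMap_swap_ne hij hkl h) h1 (by omega)).symm
  rcases h3.lt_or_eq with h3 | rfl
  · obtain ⟨e1, e2, e3, e4⟩ := mergeMap_of_max_lt h1 h2 h3
    rw [e1, e2, e3, mergeMap_of_lt e4, mergeMap_of_lt h1 (mergeMap k l v), mergeMap_of_lt h1 k,
      mergeMap_of_lt h1 v, mergeMap_of_lt h2 v]
    split_ifs <;> omega
  · obtain ⟨e1, e2⟩ := mergeMap_of_max_eq h1 h2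
    obtain ⟨e3, e4⟩ := mergeMap_of_max_eq h2 h1
    rw [e1, e2, e3, e4]
    rw [e3, e4] at h
    rcases lt_or_gt_of_ne h with h | h
    · rw [mergeMap_comm i k, mergeMap_of_lt h, mergeMap_of_lt h, mergeMap_of_lt h1 v,
        mergeMap_of_lt h2 v]
      split_ifs <;> omega
    · rw [mergeMap_comm k i, mergeMap_of_lt h, mergeMap_of_lt h, mergeMap_of_lt h1 v,
        mergeMap_of_lt h2 v]
      split_ifs <;> omega

/-- The exponent of the contraction sign. -/
def csignExp (i j : ℕ) : ℕ := if i < j then j + 1 else i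

lemma csign_eq (i j : ℕ) : csign i j = (-1) ^ csignExp i j := by
  unfold csign csignExp; split_ifs <;> rfl

lemma neg_one_pow_eq_neg {a b : ℕ} (h : (a + b) % 2 = 1) : (-1 : ℝ) ^ a = -(-1) ^ b := by
  rcases Nat.even_or_odd a with ha | ha <;> rcases Nat.even_or_odd b with hb | hb
  · obtain ⟨x, rfl⟩ := ha; obtain ⟨y, rfl⟩ := hb; omega
  · rw [ha.neg_one_pow, hb.neg_one_pow]; norm_num
  · rw [ha.neg_one_pow, hb.neg_one_pow]
  · obtain ⟨x, rfl⟩ := ha; obtain ⟨y, rfl⟩ := hb; omega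

lemma csign_swap {i j : ℕ} (h : i ≠ j) : csign j i = -csign i j := by
  rw [csign_eq, csign_eq]; apply neg_one_pow_eq_neg; unfold csignExp; split_ifs <;> omega

lemma csign_mul_csign {i j k l : ℕ} (hij : i ≠ j) (hkl : k ≠ l)
    (h : mergeMap i j k ≠ mergeMap i j l) :
    csign i j * csign (mergeMap i j k) (mergeMap i j l) =
      -(csign k l * csign (mergeMap k l i) (mergeMap k l j)) := by
  wlog h1 : i < j generalizing i j
  · have h' : mergeMap j i k ≠ mergeMap j i l := by rwa [mergeMap_comm j i, mergeMap_comm j i]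
    have := this hij.symm h' (by omega)
    rw [csign_swap hij, mergeMap_comm j i, mergeMap_comm j i,
      csign_swap (mergeMap_swap_ne hij hkl h)] at this
    linarith
  wlog h2 : k < l generalizing k l
  · have := this hkl.symm h.symm (by omega)
    rw [csign_swap hkl, mergeMap_comm l k, mergeMap_comm l k, csign_swap h] at this
    linarith
  wlog h3 : j ≤ l generalizing i j k l
  · have := this hkl h2 hij (mergeMap_swap_ne hij hkl h) h1 (by omega)
    linarith
  simp only [csign_eq, ← pow_add]
  apply neg_one_pow_eq_neg
  unfold csignExp
  rcases h3.lt_or_eq with h3 | rfl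
  · obtain ⟨e1, e2, e3, e4⟩ := mergeMap_of_max_lt h1 h2 h3
    rw [e1, e2, e3, if_pos h1, if_pos h2, if_pos e4]
    omega
  · obtain ⟨e1, e2⟩ := mergeMap_of_max_eq h1 h2
    obtain ⟨e3, e4⟩ := mergeMap_of_max_eq h2 h1
    rw [e3, e4] at h
    rw [e1, e2, e3, e4]
    split_ifs <;> omega

/-- The transposition of the labels `k` and `k + 1`. -/
def swapLabel (k v : ℕ) : ℕ := if v = k then k + 1 else if v = k + 1 then k else v

/-- The rotation by one of the labels `0, …, n - 1`. -/
def rotLabel (n v : ℕ) : ℕ := if v + 1 < n then v + 1 else if v + 1 = n then 0 else v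

/-- The inverse of `rotLabel`. -/
def rotLabelInv (n v : ℕ) : ℕ := if n ≤ v then v else if v = 0 then n - 1 else v - 1

lemma swapLabel_swapLabel (k v : ℕ) : swapLabel k (swapLabel k v) = v := by
  unfold swapLabel; split_ifs <;> omega

lemma rotLabelInv_rotLabel (n v : ℕ) : rotLabelInv n (rotLabel n v) = v := by
  unfold rotLabel; split_ifs <;> unfold rotLabelInv <;> split_ifs <;>
    first | omega | contradiction

lemma rotLabel_rotLabelInv (n v : ℕ) : rotLabel n (rotLabelInv n v) = v := by
  unfold rotLabelInv; split_ifs <;> unfold rotLabel <;> split_ifs <;> omega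

lemma swapLabel_ne {k i j : ℕ} (h : i ≠ j) : swapLabel k i ≠ swapLabel k j := fun e => h <| by
  rw [← swapLabel_swapLabel k i, e, swapLabel_swapLabel]

lemma rotLabel_ne {n i j : ℕ} (h : i ≠ j) : rotLabel n i ≠ rotLabel n j := fun e => h <| by
  rw [← rotLabelInv_rotLabel n i, e, rotLabelInv_rotLabel]

lemma mergeMap_swapLabel_of_max_eq {i j k : ℕ} (hij : i ≠ j) (h : max i j = k ∨ max i j = k + 1)
    (v : ℕ) :
    mergeMap (swapLabel k i) (swapLabel k j) (swapLabel k v) = mergeMap i j v := by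
  wlog h1 : i < j generalizing i j
  · rw [mergeMap_comm (swapLabel k i), mergeMap_comm i]
    exact this hij.symm (by omega) (by omega)
  rw [mergeMap_of_lt h1]
  unfold swapLabel mergeMap
  split_ifs <;> omega

lemma csign_swapLabel_of_max_eq {i j k : ℕ} (h : max i j = k ∨ max i j = k + 1) :
    csign (swapLabel k i) (swapLabel k j) = -csign i j := by
  simp only [csign_eq]
  apply neg_one_pow_eq_neg
  unfold csignExp swapLabel
  split_ifs <;> omega

lemma mergeMap_swapLabel_of_max_ne {i j k : ℕ} (hij : i ≠ j) (h : max i j ≠ k)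
    (h' : max i j ≠ k + 1) (v : ℕ) :
    mergeMap (swapLabel k i) (swapLabel k j) (swapLabel k v) =
      swapLabel (if max i j < k then k - 1 else k) (mergeMap i j v) := by
  wlog h1 : i < j generalizing i j
  · rw [mergeMap_comm (swapLabel k i), mergeMap_comm i, max_comm]
    exact this hij.symm (by omega) (by omega) (by omega)
  have e : swapLabel k j = j := by unfold swapLabel; split_ifs <;> omega
  have e1 : swapLabel k i < j := by unfold swapLabel; split_ifs <;> omega
  rw [e, mergeMap_of_lt h1, mergeMap_of_lt e1, max_eq_right h1.le]
  unfold swapLabel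
  split_ifs <;> omega

lemma csign_swapLabel_of_max_ne {i j k : ℕ} (h : max i j ≠ k)
    (h' : max i j ≠ k + 1) :
    csign (swapLabel k i) (swapLabel k j) = csign i j := by
  unfold csign swapLabel
  split_ifs <;> first | rfl | omega

lemma mergeMap_rotLabel {n i j : ℕ} (hij : i ≠ j) (h : ¬(i < n ∧ j < n)) (v : ℕ) :
    mergeMap (rotLabel n i) (rotLabel n j) (rotLabel n v) = rotLabel n (mergeMap i j v) := by
  wlog h1 : i < j generalizing i j
  · rw [mergeMap_comm (rotLabel n i), mergeMap_comm i]
    exact this hij.symm (by omega) (by omega)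
  have e : rotLabel n j = j := by unfold rotLabel; split_ifs <;> omega
  have e1 : rotLabel n i < j := by unfold rotLabel; split_ifs <;> omega
  rw [e, mergeMap_of_lt h1, mergeMap_of_lt e1]
  unfold rotLabel
  split_ifs <;> omega

lemma csign_rotLabel {n i j : ℕ} (h : ¬(i < n ∧ j < n)) :
    csign (rotLabel n i) (rotLabel n j) = csign i j := by
  unfold csign rotLabel
  split_ifs <;> first | rfl | omega

lemma mergeMap_rotLabel_arc {n i : ℕ} (h : i + 1 < n) (v : ℕ) :
    mergeMap (rotLabel n i) (rotLabel n (i + 1)) (rotLabel n v) =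
      rotLabel (n - 1) (mergeMap i (i + 1) v) := by
  rw [mergeMap_of_lt (Nat.lt_succ_self i)]
  have e : rotLabel n i = i + 1 := by unfold rotLabel; split_ifs; omega
  rw [e]
  by_cases h1 : i + 2 < n
  · have e1 : rotLabel n (i + 1) = i + 2 := by unfold rotLabel; split_ifs <;> omega
    rw [e1, mergeMap_of_lt (by omega)]
    unfold rotLabel
    split_ifs <;> omega
  · have e1 : rotLabel n (i + 1) = 0 := by unfold rotLabel; split_ifs <;> omega
    rw [e1, mergeMap_comm, mergeMap_of_lt (by omega)]
    unfold rotLabel; split_ifs <;> omega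

lemma csign_rotLabel_arc {n i : ℕ} (h : i + 1 < n) :
    csign (rotLabel n i) (rotLabel n (i + 1)) = -csign i (i + 1) := by
  simp only [csign_eq]
  apply neg_one_pow_eq_neg
  unfold csignExp rotLabel
  split_ifs <;> omega

lemma mergeMap_rotLabel_last {n : ℕ} (h : 2 ≤ n) (v : ℕ) :
    mergeMap (rotLabel n (n - 1)) (rotLabel n 0) (rotLabel n v) = mergeMap (n - 1) 0 v := by
  have e : rotLabel n (n - 1) = 0 := by unfold rotLabel; split_ifs <;> omega
  have e1 : rotLabel n 0 = 1 := by unfold rotLabel; split_ifs <;> omega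
  rw [e, e1, mergeMap_comm (n - 1), mergeMap_of_lt (by omega), mergeMap_of_lt (by omega)]
  unfold rotLabel; split_ifs <;> omega

lemma csign_rotLabel_last {n : ℕ} (h : 2 ≤ n) :
    csign (n - 1) 0 = (-1) ^ (n - 1) * csign (rotLabel n (n - 1)) (rotLabel n 0) := by
  have e : rotLabel n (n - 1) = 0 := by unfold rotLabel; split_ifs <;> omega
  have e1 : rotLabel n 0 = 1 := by unfold rotLabel; split_ifs <;> omega
  rw [e, e1]
  simp [csign]

namespace OddXGraph

/-- The action of a vertex map on a decorated edge. -/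
def emap (f : ℕ → ℕ) (e : OEdge) : OEdge := ⟨f e.src, f e.tgt, e.lp⟩

/-- The action of the contraction of the arc from `i` to `j` on a decorated edge. -/
def arcEdgeMap (i j : ℕ) (f : OEdge) : OEdge :=
  if f.src = i ∧ f.tgt = j then ⟨min i j, min i j, false⟩
  else if f.src = j ∧ f.tgt = i then ⟨min i j, min i j, true⟩
  else ⟨mergeMap i j f.src, mergeMap i j f.tgt, f.lp⟩

/-- Two edges with the same end-points. -/
def Par (e f : OEdge) : Prop :=
  (f.src = e.src ∧ f.tgt = e.tgt) ∨ (f.src = e.tgt ∧ f.tgt = e.src)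

/-- A multiset of edges containing two edges with the same end-points. -/
def Dbl (E : Multiset OEdge) : Prop := ∃ e ∈ E, ∃ f ∈ E.erase e, Par e f

/-- The graphs which are not set to zero by the relations. -/
def Nonzero (g : OddXGraph) : Prop := g.IsValid ∧ ¬g.hasDoubleEdge ∧ ¬g.hasInternalLoop

/-- The places where the coboundary acts: edges, arcs and crosses. -/
abbrev Op := OEdge ⊕ ((ℕ × ℕ) ⊕ ℕ)

/-- The places of `g` where the coboundary acts. -/
noncomputable def ops (g : OddXGraph) : Finset Op :=
  (g.edges.filter fun e => g.isRegular e).toFinset.disjSum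
    (g.arcs.toFinset.disjSum (Finset.range g.crosses.length))

/-- Deletion of the cross with label `a`, for a natural number `a`. -/
def deleteCrossNat (g : OddXGraph) (a : ℕ) : OddXGraph where
  ve := g.ve
  vi := g.vi
  edges := (⟨g.crosses[a]?.getD 0, g.crosses[a]?.getD 0, false⟩ : OEdge) ::ₘ g.edges
  crosses := g.crosses.eraseIdx a

/-- The graph resulting from one local action of the coboundary. -/
def app (g : OddXGraph) : Op → OddXGraph
  | Sum.inl e => g.contractEdge e
  | Sum.inr (Sum.inl p) => g.contractArc p.1 p.2
  | Sum.inr (Sum.inr a) => g.deleteCrossNat a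

/-- The sign of one local action of the coboundary. -/
noncomputable def sgn (g : OddXGraph) : Op → ℝ
  | Sum.inl e => csign e.src e.tgt
  | Sum.inr (Sum.inl p) => csign p.1 p.2
  | Sum.inr (Sum.inr a) => (-1) ^ (g.degX + (a : ℤ) + 1)

/-- The class of a graph in the extended odd graph complex. -/
noncomputable def cls (g : OddXGraph) : DoX :=
  Submodule.Quotient.mk (p := oddXRelations) (Finsupp.single g 1)

/-- The class of the coboundary of a graph. -/
noncomputable def cob (g : OddXGraph) : DoX :=
  if g.Nonzero then ∑ o ∈ g.ops, g.sgn o • cls (g.app o) else 0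

lemma mem_ops_edge {g : OddXGraph} {e : OEdge} :
    Sum.inl e ∈ g.ops ↔ e ∈ g.edges ∧ g.isRegular e := by
  simp [ops]

lemma mem_ops_arc {g : OddXGraph} {p : ℕ × ℕ} : Sum.inr (Sum.inl p) ∈ g.ops ↔ p ∈ g.arcs := by
  simp [ops]

lemma mem_ops_cross {g : OddXGraph} {a : ℕ} :
    Sum.inr (Sum.inr a) ∈ g.ops ↔ a < g.crosses.length := by
  simp [ops]

lemma mem_arcs {g : OddXGraph} {p : ℕ × ℕ} :
    p ∈ g.arcs ↔ (p.1 + 1 < g.ve ∧ p.2 = p.1 + 1) ∨ (2 ≤ g.ve ∧ p.1 = g.ve - 1 ∧ p.2 = 0) := by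
  obtain ⟨i, j⟩ := p
  unfold arcs
  split_ifs with h
  · simp only [List.mem_append, List.mem_map, List.mem_range, Prod.mk.injEq, List.mem_singleton]
    constructor
    · rintro (⟨a, h1, rfl, rfl⟩ | h1)
      · left; omega
      · right; omega
    · rintro (h1 | h1)
      · exact Or.inl ⟨i, by omega, rfl, h1.2.symm⟩
      · right; omega
  · simp; omega

lemma arcs_nodup (g : OddXGraph) : g.arcs.Nodup := by
  unfold arcs
  split_ifs with h
  · refine List.Nodup.append ?_ (List.nodup_singleton _) ?_
    · exact List.nodup_range.map fun a b h => by simpa using h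
    · simp [List.disjoint_singleton]
  · exact List.nodup_nil

lemma Par.symm {e f : OEdge} (h : Par e f) : Par f e := by
  unfold Par at *; omega

lemma nodup_of_not_dbl {E : Multiset OEdge} (h : ¬Dbl E) : E.Nodup := by
  rw [Multiset.nodup_iff_le]
  intro a ha
  refine h ⟨a, ?_, a, ?_, Or.inl ⟨rfl, rfl⟩⟩
  · exact Multiset.mem_of_le ha (by simp)
  · have := Multiset.erase_le_erase a ha
    exact Multiset.mem_of_le this (by simp)

lemma dbl_map {E : Multiset OEdge} {κ : OEdge → OEdge} {a b : OEdge} (ha : a ∈ E)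
    (hb : b ∈ E.erase a) (h : Par (κ a) (κ b)) : Dbl (E.map κ) := by
  refine ⟨κ a, Multiset.mem_map_of_mem _ ha, κ b, ?_, h⟩
  rw [← Multiset.map_erase_of_mem _ _ ha]
  exact Multiset.mem_map_of_mem _ hb

lemma dbl_map_iff {E : Multiset OEdge} {κ : OEdge → OEdge} :
    Dbl (E.map κ) ↔ ∃ a ∈ E, ∃ b ∈ E.erase a, Par (κ a) (κ b) := by
  constructor
  · rintro ⟨e, he, f, hf, h⟩
    obtain ⟨a, ha, rfl⟩ := Multiset.mem_map.1 he
    rw [← Multiset.map_erase_of_mem _ _ ha] at hf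
    obtain ⟨b, hb, rfl⟩ := Multiset.mem_map.1 hf
    exact ⟨a, ha, b, hb, h⟩
  · rintro ⟨a, ha, b, hb, h⟩
    exact dbl_map ha hb h

lemma dbl_mono {E F : Multiset OEdge} (hEF : E ≤ F) (h : Dbl E) : Dbl F := by
  obtain ⟨a, ha, b, hb, h⟩ := h
  exact ⟨a, Multiset.mem_of_le hEF ha, b, Multiset.mem_of_le (Multiset.erase_le_erase a hEF) hb, h⟩

lemma cls_eq_zero {g : OddXGraph} (h : ¬g.Nonzero) : cls g = 0 := by
  rw [cls, Submodule.Quotient.mk_eq_zero]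
  apply Submodule.subset_span
  by_cases h1 : g.IsValid
  · by_cases h2 : g.hasDoubleEdge
    · exact Or.inl (Or.inl (Or.inr ⟨g, h2, rfl⟩))
    · refine Or.inl (Or.inr ⟨g, ?_, rfl⟩)
      by_contra h3
      exact h ⟨h1, h2, h3⟩
  · exact Or.inl (Or.inl (Or.inl ⟨g, h1, rfl⟩))

lemma cls_eq_smul {g g' : OddXGraph} {ε : ℝ} (h : OddXRel g g' ε) : cls g = ε • cls g' := by
  rw [cls, cls, ← Submodule.Quotient.mk_smul, Submodule.Quotient.eq]
  exact Submodule.subset_span (Or.inr ⟨g, g', ε, h, rfl⟩)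

lemma Nonzero.nodup {g : OddXGraph} (h : g.Nonzero) : g.edges.Nodup :=
  nodup_of_not_dbl h.2.1

lemma mk_deltaXGen (g : OddXGraph) :
    Submodule.Quotient.mk (p := oddXRelations) (deltaXGen g) = cob g := by
  unfold deltaXGen cob
  by_cases h : g.Nonzero
  · have h' := h
    unfold Nonzero at h'
    rw [if_pos h', if_pos h, ops, Finset.sum_disjSum, Finset.sum_disjSum, ← add_assoc,
      ← Submodule.mkQ_apply, map_add, map_add, map_multiset_sum, map_list_sum, map_list_sum,
      Multiset.map_map, List.map_map, List.map_map]
    congr 1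
    · congr 1
      · rw [Finset.sum, Multiset.toFinset_val, Multiset.dedup_eq_self.2 (h.nodup.filter _)]
        rfl
      · rw [List.sum_toFinset _ g.arcs_nodup]
        rfl
    · rw [Finset.sum_range, Fin.sum_univ_def]
      congr 1
      refine List.map_congr_left fun a _ => ?_
      have e : g.deleteCross a = g.deleteCrossNat a := by
        simp [deleteCross, deleteCrossNat]
      simp only [Function.comp_apply, map_smul, e]
      rfl
  · have h' := h
    unfold Nonzero at h'
    rw [if_neg h', if_neg h]
    exact Submodule.Quotient.mk_zero _

end OddXGraph

lemma mergeMap_eq_iff {i j a b : ℕ} (hij : i ≠ j) :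
    mergeMap i j a = mergeMap i j b ↔ a = b ∨ (a = i ∧ b = j) ∨ (a = j ∧ b = i) := by
  wlog h1 : i < j generalizing i j
  · rw [mergeMap_comm i j, mergeMap_comm i j, this hij.symm (by omega)]
    tauto
  simp only [mergeMap_of_lt h1]
  split_ifs <;> omega

lemma mergeMap_lt {i j n v : ℕ} (hij : i ≠ j) (hi : i < n) (hj : j < n) (hv : v < n) :
    mergeMap i j v < n - 1 := by
  unfold mergeMap; split_ifs <;> omega

lemma mergeMap_le (i j v : ℕ) : mergeMap i j v ≤ v := by
  unfold mergeMap; split_ifs <;> omega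

lemma mergeMap_left (i j : ℕ) : mergeMap i j i = min i j := by simp [mergeMap]

lemma mergeMap_right (i j : ℕ) : mergeMap i j j = min i j := by simp [mergeMap]

lemma mergeMap_of_lt_max {i j v : ℕ} (h : v < max i j) : mergeMap i j v = v := by
  unfold mergeMap; split_ifs <;> omega

lemma mergeMap_succ_of_max_le {i j v : ℕ} (h : max i j ≤ v) : mergeMap i j (v + 1) = v := by
  unfold mergeMap; split_ifs <;> omega

namespace OddXGraph

lemma mergeMap_mem {i j w : ℕ} : ∃ v, mergeMap i j v = w ∧ v ≠ max i j ∧ w ≤ v ∧ v ≤ w + 1 ∧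
    (w < max i j → v = w) ∧ (max i j ≤ w → v = w + 1) := by
  by_cases h : w < max i j
  · exact ⟨w, mergeMap_of_lt_max h, by omega⟩
  · exact ⟨w + 1, mergeMap_succ_of_max_le (by omega), by omega⟩

/-- The number of ends of an edge at a vertex. -/
def inc (v : ℕ) (e : OEdge) : ℕ := (if e.src = v then 1 else 0) + (if e.tgt = v then 1 else 0)

lemma valence_eq (g : OddXGraph) (v : ℕ) : g.valence v = (g.edges.map (inc v)).sum := rfl

lemma inc_le_inc {μ : ℕ → ℕ} {κ : OEdge → OEdge} (h1 : ∀ f, (κ f).src = μ f.src)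
    (h2 : ∀ f, (κ f).tgt = μ f.tgt) (v : ℕ) (f : OEdge) : inc v f ≤ inc (μ v) (κ f) := by
  unfold inc
  rw [h1, h2]
  split_ifs <;> simp_all

lemma sum_inc_le {μ : ℕ → ℕ} {κ : OEdge → OEdge} (h1 : ∀ f, (κ f).src = μ f.src)
    (h2 : ∀ f, (κ f).tgt = μ f.tgt) (E : Multiset OEdge) (v : ℕ) :
    (E.map (inc v)).sum ≤ ((E.map κ).map (inc (μ v))).sum := by
  rw [Multiset.map_map]
  exact Multiset.sum_map_le_sum_map _ _ fun f _ => inc_le_inc h1 h2 v f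

lemma sum_inc_add_le {μ : ℕ → ℕ} {κ : OEdge → OEdge} (h1 : ∀ f, (κ f).src = μ f.src)
    (h2 : ∀ f, (κ f).tgt = μ f.tgt) (E : Multiset OEdge) {v w : ℕ} (hvw : v ≠ w)
    (hμ : μ w = μ v) :
    (E.map (inc v)).sum + (E.map (inc w)).sum ≤ ((E.map κ).map (inc (μ v))).sum := by
  rw [Multiset.map_map, ← Multiset.sum_map_add]
  refine Multiset.sum_map_le_sum_map _ _ fun f _ => ?_
  simp only [inc, Function.comp, h1, h2]
  by_cases a1 : f.src = v <;> by_cases a2 : f.tgt = v <;> by_cases a3 : f.src = w <;>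
    by_cases a4 : f.tgt = w <;> simp_all

lemma valence_erase {g : OddXGraph} {e : OEdge} (he : e ∈ g.edges) (v : ℕ) :
    g.valence v = inc v e + ((g.edges.erase e).map (inc v)).sum := by
  rw [valence_eq]
  conv_lhs => rw [← Multiset.cons_erase he]
  simp

lemma connected_of_map {g g' : OddXGraph} (μ : ℕ → ℕ) (hg : g.Connected)
    (hμ : ∀ w < g'.nv, ∃ v < g.nv, μ v = w)
    (h : ∀ a b, g.adj a b → μ a = μ b ∨ g'.adj (μ a) (μ b)) : g'.Connected := by
  intro a b ha hb
  obtain ⟨a', ha', rfl⟩ := hμ a ha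
  obtain ⟨b', hb', rfl⟩ := hμ b hb
  refine (hg a' b' ha' hb').lift' μ fun x y hxy => ?_
  rcases h x y hxy with h | h
  · show Relation.ReflTransGen g'.adj (μ x) (μ y)
    rw [h]
  · exact Relation.ReflTransGen.single h

lemma edge_props {g : OddXGraph} (hg : g.Nonzero) {e : OEdge} (he : Sum.inl e ∈ g.ops) :
    e ∈ g.edges ∧ e.src ≠ e.tgt ∧ ¬(e.src < g.ve ∧ e.tgt < g.ve) ∧ e.src < g.ve + g.vi ∧
      e.tgt < g.ve + g.vi := by
  obtain ⟨h1, h2, h3⟩ := mem_ops_edge.1 he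
  exact ⟨h1, h2, h3, hg.1.1 e h1⟩

lemma arc_props {g : OddXGraph} {p : ℕ × ℕ} (hp : p ∈ g.arcs) :
    p.1 < g.ve ∧ p.2 < g.ve ∧ p.1 ≠ p.2 ∧ 2 ≤ g.ve := by
  rcases mem_arcs.1 hp with h | h <;> omega

lemma not_par {g : OddXGraph} (hg : g.Nonzero) {e f : OEdge} (he : e ∈ g.edges)
    (hf : f ∈ g.edges.erase e) : ¬Par e f := fun h => hg.2.1 ⟨e, he, f, hf, h⟩

lemma contractEdge_valid {g : OddXGraph} (hg : g.Nonzero) {e : OEdge}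
    (he : Sum.inl e ∈ g.ops) :
    (g.contractEdge e).IsValid ∧ ¬(g.contractEdge e).hasInternalLoop := by
  obtain ⟨he, hne, hreg, hs, ht⟩ := edge_props hg he
  obtain ⟨⟨hv1, hv2, hv3, hv4, hv5, hv6⟩, hd, hl⟩ := id hg
  have hmem : ∀ f ∈ (g.contractEdge e).edges, ∃ f' ∈ g.edges.erase e,
      emap (mergeMap e.src e.tgt) f' = f := fun f hf => Multiset.mem_map.1 hf
  have hedges : (g.contractEdge e).edges =
    (g.edges.erase e).map (emap (mergeMap e.src e.tgt)) := rfl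
  have hval : ∀ v, ((g.edges.erase e).map (inc v)).sum ≤
      (g.contractEdge e).valence (mergeMap e.src e.tgt v) := fun v => by
    rw [valence_eq, hedges]
    exact sum_inc_le (fun _ => rfl) (fun _ => rfl) _ _
  have hnv : (g.contractEdge e).nv = g.nv - 1 := by
    unfold nv contractEdge; simp only; omega
  have hinc : ∀ v, v ≠ e.src → v ≠ e.tgt → inc v e = 0 := fun v h1 h2 => by
    simp [inc, h1.symm, h2.symm]
  have hinc1 : inc e.src e = 1 := by simp [inc, hne.symm]
  have hinc2 : inc e.tgt e = 1 := by simp [inc, hne]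
  refine ⟨⟨?_, ?_, ?_, ?_, ?_, ?_⟩, ?_⟩
  · intro f hf
    obtain ⟨f', hf', rfl⟩ := hmem f hf
    have := hv1 f' (Multiset.mem_of_mem_erase hf')
    rw [hnv]
    exact ⟨mergeMap_lt hne hs ht this.1, mergeMap_lt hne hs ht this.2⟩
  · intro f hf hf2
    obtain ⟨f', hf', rfl⟩ := hmem f hf
    exact hv2 f' (Multiset.mem_of_mem_erase hf') fun h => hf2 (congrArg (mergeMap e.src e.tgt) h)
  · intro w hw1 hw2
    rw [hnv] at hw2
    have hw1 : g.ve ≤ w := hw1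
    obtain ⟨v, rfl, hv, hvw⟩ := mergeMap_mem (i := e.src) (j := e.tgt) (w := w)
    unfold nv at *
    by_cases hm : v = min e.src e.tgt
    · have h1 := hv3 e.src (by omega) hs
      have h2 := hv3 e.tgt (by omega) ht
      rw [valence_erase he, hinc1] at h1
      rw [valence_erase he, hinc2] at h2
      have := sum_inc_add_le (μ := mergeMap e.src e.tgt) (fun _ => rfl) (fun _ => rfl)
        (g.edges.erase e) (κ := emap (mergeMap e.src e.tgt)) hne
        (by rw [mergeMap_left, mergeMap_right])
      rw [← hedges, ← valence_eq, mergeMap_left] at this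
      rw [hm, mergeMap_of_lt_max (by omega)]
      omega
    · have h1 := hv3 v (by omega) (by omega)
      rw [valence_erase he, hinc v (by omega) (by omega)] at h1
      have := hval v
      omega
  · intro w hw
    have hw : w < g.ve := hw
    have e0 : mergeMap e.src e.tgt w = w := mergeMap_of_lt_max (by omega)
    rcases hv4 w hw with h | h
    · left
      rw [valence_erase he] at h
      by_cases h1 : w = e.src
      · have h2 := hv3 e.tgt (by omega) ht
        rw [valence_erase he, hinc2] at h2
        have := hval e.tgt
        rw [mergeMap_right, show min e.src e.tgt = w by omega] at this
        omega
      by_cases h3 : w = e.tgt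
      · have h2 := hv3 e.src (by omega) hs
        rw [valence_erase he, hinc1] at h2
        have := hval e.src
        rw [mergeMap_left, show min e.src e.tgt = w by omega] at this
        omega
      · rw [hinc w h1 h3] at h
        have := hval w
        rw [e0] at this
        omega
    · right
      exact List.mem_map.2 ⟨w, h, e0⟩
  · intro c hc
    obtain ⟨c', hc', rfl⟩ := List.mem_map.1 hc
    exact (mergeMap_le _ _ _).trans_lt (hv5 c' hc')
  · refine connected_of_map (mergeMap e.src e.tgt) hv6 ?_ ?_
    · intro w hw
      obtain ⟨v, rfl, hv, hvw⟩ := mergeMap_mem (i := e.src) (j := e.tgt) (w := w)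
      exact ⟨v, by omega, rfl⟩
    · rintro a b (⟨f, hf, h⟩ | h)
      · by_cases hfe : f = e
        · left
          subst hfe
          rcases h with ⟨rfl, rfl⟩ | ⟨rfl, rfl⟩ <;> rw [mergeMap_left, mergeMap_right]
        · right; left
          refine ⟨emap (mergeMap e.src e.tgt) f, Multiset.mem_map_of_mem (emap _)
            ((Multiset.mem_erase_of_ne hfe).2 hf), ?_⟩
          rcases h with ⟨rfl, rfl⟩ | ⟨rfl, rfl⟩
          · exact Or.inl ⟨rfl, rfl⟩
          · exact Or.inr ⟨rfl, rfl⟩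
      · right; right
        exact ⟨(mergeMap_le _ _ _).trans_lt h.1, (mergeMap_le _ _ _).trans_lt h.2⟩
  · rintro ⟨f, hf, h1, h2⟩
    obtain ⟨f', hf', rfl⟩ := hmem f hf
    rcases (mergeMap_eq_iff hne).1 h1 with h | h | h
    · exact hl ⟨f', Multiset.mem_of_mem_erase hf', h, le_trans h2 (mergeMap_le _ _ _)⟩
    · exact not_par hg he hf' (Or.inl h)
    · exact not_par hg he hf' (Or.inr h)

lemma arcEdgeMap_src (i j : ℕ) (f : OEdge) :
    (arcEdgeMap i j f).src = mergeMap i j f.src := by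
  unfold arcEdgeMap
  split_ifs with h1 h2
  · rw [h1.1, mergeMap_left]
  · rw [h2.1, mergeMap_right]
  · rfl

lemma arcEdgeMap_tgt (i j : ℕ) (f : OEdge) :
    (arcEdgeMap i j f).tgt = mergeMap i j f.tgt := by
  unfold arcEdgeMap
  split_ifs with h1 h2
  · rw [h1.2, mergeMap_right]
  · rw [h2.2, mergeMap_left]
  · rfl

lemma arcEdgeMap_eq {i j : ℕ} {f : OEdge} (h1 : ¬(f.src = i ∧ f.tgt = j))
    (h2 : ¬(f.src = j ∧ f.tgt = i)) : arcEdgeMap i j f = emap (mergeMap i j) f := by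
  unfold arcEdgeMap
  rw [if_neg h1, if_neg h2]
  rfl

lemma contractArc_valid {g : OddXGraph} (hg : g.Nonzero) {p : ℕ × ℕ} (hp : p ∈ g.arcs) :
    (g.contractArc p.1 p.2).IsValid ∧ ¬(g.contractArc p.1 p.2).hasInternalLoop := by
  obtain ⟨hi, hj, hne, h2⟩ := arc_props hp
  obtain ⟨i, j⟩ := p
  simp only at hi hj hne ⊢
  obtain ⟨⟨hv1, hv2, hv3, hv4, hv5, hv6⟩, hd, hl⟩ := id hg
  have hedges : (g.contractArc i j).edges = g.edges.map (arcEdgeMap i j) := rfl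
  have hmem : ∀ f ∈ (g.contractArc i j).edges, ∃ f' ∈ g.edges, arcEdgeMap i j f' = f :=
    fun f hf => by rw [hedges] at hf; simpa using Multiset.mem_map.1 hf
  have hval : ∀ v, g.valence v ≤ (g.contractArc i j).valence (mergeMap i j v) := fun v =>
    sum_inc_le (arcEdgeMap_src i j) (arcEdgeMap_tgt i j) _ _
  have hnv : (g.contractArc i j).nv = g.nv - 1 := by
    unfold nv contractArc; simp only; omega
  have hve : (g.contractArc i j).ve = g.ve - 1 := rfl
  have hn : g.nv = g.ve + g.vi := rfl
  refine ⟨⟨?_, ?_, ?_, ?_, ?_, ?_⟩, ?_⟩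
  · intro f hf
    obtain ⟨f', hf', rfl⟩ := hmem f hf
    have := hv1 f' hf'
    rw [hnv, arcEdgeMap_src, arcEdgeMap_tgt]
    exact ⟨mergeMap_lt hne (by omega) (by omega) this.1,
      mergeMap_lt hne (by omega) (by omega) this.2⟩
  · intro f hf hf2
    obtain ⟨f', hf', rfl⟩ := hmem f hf
    rw [arcEdgeMap_src, arcEdgeMap_tgt, Ne, mergeMap_eq_iff hne] at hf2
    push Not at hf2
    rw [arcEdgeMap_eq (by tauto) (by tauto)]
    exact hv2 f' hf' hf2.1
  · intro w hw1 hw2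
    rw [hnv] at hw2
    rw [hve] at hw1
    obtain ⟨v, rfl, hv, hvw⟩ := mergeMap_mem (i := i) (j := j) (w := w)
    exact (hv3 v (by omega) (by omega)).trans (hval v)
  · intro w hw
    rw [hve] at hw
    obtain ⟨v, rfl, hv, hvw⟩ := mergeMap_mem (i := i) (j := j) (w := w)
    rcases hv4 v (by omega) with h | h
    · exact Or.inl (h.trans (hval v))
    · exact Or.inr (List.mem_map.2 ⟨v, h, rfl⟩)
  · intro c hc
    obtain ⟨c', hc', rfl⟩ := List.mem_map.1 hc
    exact mergeMap_lt hne hi hj (hv5 c' hc')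
  · refine connected_of_map (mergeMap i j) hv6 ?_ ?_
    · intro w hw
      obtain ⟨v, rfl, hv, hvw⟩ := mergeMap_mem (i := i) (j := j) (w := w)
      exact ⟨v, by omega, rfl⟩
    · rintro a b (⟨f, hf, h⟩ | h)
      · right; left
        refine ⟨arcEdgeMap i j f, Multiset.mem_map_of_mem _ hf, ?_⟩
        rw [arcEdgeMap_src, arcEdgeMap_tgt]
        rcases h with ⟨rfl, rfl⟩ | ⟨rfl, rfl⟩
        · exact Or.inl ⟨rfl, rfl⟩
        · exact Or.inr ⟨rfl, rfl⟩
      · right; right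
        exact ⟨mergeMap_lt hne hi hj h.1, mergeMap_lt hne hi hj h.2⟩
  · rintro ⟨f, hf, h1, h2⟩
    obtain ⟨f', hf', rfl⟩ := hmem f hf
    rw [arcEdgeMap_src, hve] at h2
    rw [arcEdgeMap_src, arcEdgeMap_tgt, mergeMap_eq_iff hne] at h1
    by_cases h3 : f'.src < g.ve
    · have := mergeMap_lt hne hi hj h3
      omega
    · rcases h1 with h | h | h
      · exact hl ⟨f', hf', h, by omega⟩
      · omega
      · omega

lemma deleteCrossNat_valid {g : OddXGraph} (hg : g.Nonzero) {a : ℕ}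
    (ha : a < g.crosses.length) :
    (g.deleteCrossNat a).IsValid ∧ ¬(g.deleteCrossNat a).hasInternalLoop := by
  obtain ⟨⟨hv1, hv2, hv3, hv4, hv5, hv6⟩, hd, hl⟩ := id hg
  obtain ⟨c, hc⟩ : ∃ c, g.crosses[a]?.getD 0 = c := ⟨_, rfl⟩
  have hc' : g.crosses[a] = c := by simpa [ha] using hc
  have hcv : c < g.ve := hv5 c (hc' ▸ List.getElem_mem ha)
  have hedges : (g.deleteCrossNat a).edges = ⟨c, c, false⟩ ::ₘ g.edges := by
    unfold deleteCrossNat; simp only [hc]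
  have hn : g.nv = g.ve + g.vi := rfl
  have hval : ∀ v, (g.deleteCrossNat a).valence v = inc v ⟨c, c, false⟩ + g.valence v :=
    fun v => by rw [valence_eq, hedges, valence_eq]; simp
  have hnv : (g.deleteCrossNat a).nv = g.nv := rfl
  refine ⟨⟨?_, ?_, ?_, ?_, ?_, ?_⟩, ?_⟩
  · intro f hf
    rw [hedges, Multiset.mem_cons] at hf
    rw [hnv]
    rcases hf with rfl | hf
    · exact ⟨by simp only; omega, by simp only; omega⟩
    · exact hv1 f hf
  · intro f hf
    rw [hedges, Multiset.mem_cons] at hf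
    rcases hf with rfl | hf
    · exact fun _ => rfl
    · exact hv2 f hf
  · intro w hw1 hw2
    rw [hval]
    exact (hv3 w hw1 hw2).trans (by omega)
  · intro w hw
    rw [hval]
    by_cases hwc : w = c
    · left
      simp [inc, hwc]; omega
    · rcases hv4 w hw with h | h
      · left; omega
      · right
        obtain ⟨b, hb, rfl⟩ := List.mem_iff_getElem.1 h
        refine List.mem_eraseIdx_iff_getElem.2 ⟨b, hb, ?_, rfl⟩
        rintro rfl
        exact hwc hc'
  · intro b hb
    exact hv5 b (List.mem_of_mem_eraseIdx hb)
  · refine connected_of_map id hv6 (fun w hw => ⟨w, hw, rfl⟩) ?_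
    rintro a b (⟨f, hf, h⟩ | h)
    · right; left
      exact ⟨f, by rw [hedges]; exact Multiset.mem_cons_of_mem hf, h⟩
    · exact Or.inr (Or.inr h)
  · rintro ⟨f, hf, h1, h2⟩
    rw [hedges, Multiset.mem_cons] at hf
    rcases hf with rfl | hf
    · have h2 : g.ve ≤ c := h2
      omega
    · exact hl ⟨f, hf, h1, h2⟩

lemma app_valid {g : OddXGraph} (hg : g.Nonzero) {o : Op} (ho : o ∈ g.ops) :
    (g.app o).IsValid ∧ ¬(g.app o).hasInternalLoop := by
  rcases o with e | p | a
  · exact contractEdge_valid hg ho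
  · exact contractArc_valid hg (mem_ops_arc.1 ho)
  · exact deleteCrossNat_valid hg (mem_ops_cross.1 ho)

lemma nonzero_app_iff {g : OddXGraph} (hg : g.Nonzero) {o : Op} (ho : o ∈ g.ops) :
    (g.app o).Nonzero ↔ ¬Dbl (g.app o).edges :=
  ⟨fun h => h.2.1, fun h => ⟨(app_valid hg ho).1, h, (app_valid hg ho).2⟩⟩

/-- The action of a vertex map on a graph. -/
def relabel (f : ℕ → ℕ) (g : OddXGraph) : OddXGraph where
  ve := g.ve
  vi := g.vi
  edges := g.edges.map (emap f)
  crosses := g.crosses.map f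

/-- Mutually inverse vertex maps preserving the sets of external and of all vertices. -/
structure IsRelabelling (g : OddXGraph) (f f' : ℕ → ℕ) : Prop where
  left : ∀ v, f' (f v) = v
  right : ∀ v, f (f' v) = v
  lt_ve : ∀ v, f v < g.ve ↔ v < g.ve
  lt_nv : ∀ v, f v < g.nv ↔ v < g.nv

/-- The action of a vertex map on the places where the coboundary acts. -/
def opMap (f : ℕ → ℕ) : Op → Op
  | Sum.inl e => Sum.inl (emap f e)
  | Sum.inr (Sum.inl p) => Sum.inr (Sum.inl (f p.1, f p.2))
  | Sum.inr (Sum.inr a) => Sum.inr (Sum.inr a)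

lemma opMap_opMap {f f' : ℕ → ℕ} (h : ∀ v, f' (f v) = v) (o : Op) :
    opMap f' (opMap f o) = o := by
  rcases o with e | p | a <;> simp [opMap, emap, h]

lemma emap_id : emap (fun v => v) = id := rfl

lemma relabel_eq_self {f : ℕ → ℕ} (h : ∀ v, f v = v) (g : OddXGraph) : relabel f g = g := by
  obtain rfl : f = fun v => v := funext h
  simp [relabel, emap_id]

lemma relabel_relabel (f f' : ℕ → ℕ) (g : OddXGraph) :
    relabel f' (relabel f g) = relabel (fun v => f' (f v)) g := by
  simp [relabel, emap, Function.comp_def]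
  rfl

namespace IsRelabelling

variable {g : OddXGraph} {f f' : ℕ → ℕ}

lemma inj (h : g.IsRelabelling f f') {a b : ℕ} : f a = f b ↔ a = b :=
  (Function.LeftInverse.injective h.left).eq_iff

lemma symm (h : g.IsRelabelling f f') : (relabel f g).IsRelabelling f' f where
  left := h.right
  right := h.left
  lt_ve v := by
    show f' v < g.ve ↔ v < g.ve
    rw [← h.lt_ve, h.right]
  lt_nv v := by
    show f' v < g.nv ↔ v < g.nv
    rw [← h.lt_nv, h.right]

lemma par (h : g.IsRelabelling f f') {a b : OEdge} : Par (emap f a) (emap f b) ↔ Par a b := by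
  simp only [Par, emap, h.inj]

lemma inc (h : g.IsRelabelling f f') (v : ℕ) (e : OEdge) : inc v (emap f e) = inc (f' v) e := by
  have h1 : ∀ x, f x = v ↔ x = f' v := fun x => by rw [← h.inj (b := f' v), h.right]
  simp only [OddXGraph.inc, emap, h1]

lemma nonzero (h : g.IsRelabelling f f') (hg : g.Nonzero) : (relabel f g).Nonzero := by
  obtain ⟨⟨hv1, hv2, hv3, hv4, hv5, hv6⟩, hd, hl⟩ := id hg
  have hedges : (relabel f g).edges = g.edges.map (emap f) := rfl
  have hmem : ∀ e ∈ (relabel f g).edges, ∃ e' ∈ g.edges, emap f e' = e :=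
    fun e he => Multiset.mem_map.1 he
  have hval : ∀ v, (relabel f g).valence v = g.valence (f' v) := fun v => by
    rw [valence_eq, hedges, valence_eq, Multiset.map_map]
    exact congrArg _ (Multiset.map_congr rfl fun e _ => h.inc v e)
  have hve : ∀ v, f' v < g.ve ↔ v < g.ve := h.symm.lt_ve
  have hnv : ∀ v, f' v < g.nv ↔ v < g.nv := h.symm.lt_nv
  refine ⟨⟨?_, ?_, ?_, ?_, ?_, ?_⟩, ?_, ?_⟩
  · intro e he
    obtain ⟨e', he', rfl⟩ := hmem e he
    exact ⟨(h.lt_nv _).2 (hv1 e' he').1, (h.lt_nv _).2 (hv1 e' he').2⟩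
  · intro e he hne
    obtain ⟨e', he', rfl⟩ := hmem e he
    exact hv2 e' he' fun e0 => hne (congrArg f e0)
  · intro v h1 h2
    have h1 : g.ve ≤ v := h1
    rw [hval]
    exact hv3 _ (by rw [← not_lt, hve]; omega) ((hnv v).2 h2)
  · intro v h1
    rw [hval]
    refine (hv4 _ ((hve v).2 h1)).imp_right fun h2 => List.mem_map.2 ⟨_, h2, h.right v⟩
  · intro c hc
    obtain ⟨c', hc', rfl⟩ := List.mem_map.1 hc
    exact (h.lt_ve _).2 (hv5 c' hc')
  · refine connected_of_map f hv6 (fun w hw => ⟨f' w, (hnv w).2 hw, h.right w⟩) ?_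
    rintro a b (⟨e, he, h1⟩ | h1)
    · refine Or.inr (Or.inl ⟨emap f e, Multiset.mem_map_of_mem _ he, ?_⟩)
      simpa only [emap, h.inj] using h1
    · exact Or.inr (Or.inr ⟨(h.lt_ve _).2 h1.1, (h.lt_ve _).2 h1.2⟩)
  · intro hdbl
    obtain ⟨a, ha, b, hb, hp⟩ := dbl_map_iff.1 (show Dbl (g.edges.map (emap f)) from hdbl)
    exact hd ⟨a, ha, b, hb, h.par.1 hp⟩
  · rintro ⟨e, he, h1, h2⟩
    obtain ⟨e', he', rfl⟩ := hmem e he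
    refine hl ⟨e', he', h.inj.1 h1, ?_⟩
    have h2 : g.ve ≤ f e'.src := h2
    rw [← not_lt, ← h.lt_ve]
    omega

lemma opMap_mem (h : g.IsRelabelling f f')
    (ha : ∀ p ∈ g.arcs, (f p.1, f p.2) ∈ g.arcs) {o : Op} (ho : o ∈ g.ops) :
    opMap f o ∈ (relabel f g).ops := by
  rcases o with e | p | a
  · obtain ⟨h1, h2, h3⟩ := mem_ops_edge.1 ho
    refine mem_ops_edge.2 ⟨Multiset.mem_map_of_mem _ h1, fun h4 => h2 (h.inj.1 h4), ?_⟩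
    rintro ⟨h4, h5⟩
    exact h3 ⟨(h.lt_ve _).1 h4, (h.lt_ve _).1 h5⟩
  · exact mem_ops_arc.2 (ha p (mem_ops_arc.1 ho))
  · have := mem_ops_cross.1 ho
    exact mem_ops_cross.2 (by simpa [relabel] using this)

end IsRelabelling

/-- Equivariance of the coboundary, from a bijection between the places where it acts. -/
lemma cob_eq_smul_of_bij {g g' : OddXGraph} {ε : ℝ} (T T' : Op → Op)
    (hN : g.Nonzero ↔ g'.Nonzero) (h1 : g.Nonzero → ∀ o ∈ g.ops, T o ∈ g'.ops)
    (h2 : g.Nonzero → ∀ o ∈ g'.ops, T' o ∈ g.ops)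
    (h3 : g.Nonzero → ∀ o ∈ g.ops, T' (T o) = o) (h4 : g.Nonzero → ∀ o ∈ g'.ops, T (T' o) = o)
    (h5 : g.Nonzero → ∀ o ∈ g.ops,
      g.sgn o • cls (g.app o) = ε • g'.sgn (T o) • cls (g'.app (T o))) :
    cob g = ε • cob g' := by
  unfold cob
  by_cases h : g.Nonzero
  · rw [if_pos h, if_pos (hN.1 h), Finset.smul_sum]
    exact Finset.sum_nbij' T T' (h1 h) (h2 h) (h3 h) (h4 h) (h5 h)
  · rw [if_neg h, if_neg (hN.not.1 h), smul_zero]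

lemma IsRelabelling.cob_eq_smul {g : OddXGraph} {f f' : ℕ → ℕ} {ε : ℝ}
    (h : g.IsRelabelling f f')
    (ha : ∀ p ∈ g.arcs, (f p.1, f p.2) ∈ g.arcs)
    (ha' : ∀ p ∈ g.arcs, (f' p.1, f' p.2) ∈ g.arcs)
    (hv : g.Nonzero → ∀ o ∈ g.ops, g.sgn o • cls (g.app o) =
      ε • (relabel f g).sgn (opMap f o) • cls ((relabel f g).app (opMap f o))) :
    cob g = ε • cob (relabel f g) := by
  have e : relabel f' (relabel f g) = g := by
    rw [relabel_relabel, relabel_eq_self h.left]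
  refine cob_eq_smul_of_bij (opMap f) (opMap f') ⟨h.nonzero, fun h1 => ?_⟩
    (fun _ o ho => h.opMap_mem ha ho) (fun _ o ho => ?_) (fun _ o _ => opMap_opMap h.left o)
    (fun _ o _ => opMap_opMap h.right o) hv
  · have := h.symm.nonzero h1
    rwa [e] at this
  · have := h.symm.opMap_mem ha' ho
    rwa [e] at this

lemma contractEdge_relabel {g : OddXGraph} {f k : ℕ → ℕ} {e : OEdge} (he : e ∈ g.edges)
    (h : ∀ v, mergeMap (f e.src) (f e.tgt) (f v) = k (mergeMap e.src e.tgt v)) :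
    (relabel f g).contractEdge (emap f e) = relabel k (g.contractEdge e) := by
  unfold relabel contractEdge
  simp only [OddXGraph.mk.injEq, true_and]
  rw [← Multiset.map_erase_of_mem _ _ he]
  simp only [Multiset.map_map, List.map_map]
  refine ⟨Multiset.map_congr rfl fun x _ => ?_, List.map_congr_left fun x _ => h x⟩
  simp [emap, h]

lemma arcEdgeMap_emap {f k : ℕ → ℕ} (hf : Function.Injective f) {i j : ℕ}
    (h : ∀ v, mergeMap (f i) (f j) (f v) = k (mergeMap i j v)) (e : OEdge) :
    arcEdgeMap (f i) (f j) (emap f e) = emap k (arcEdgeMap i j e) := by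
  have h1 := h i
  rw [mergeMap_left, mergeMap_left] at h1
  unfold arcEdgeMap
  simp only [emap, hf.eq_iff]
  split_ifs <;> simp [h1, h]

lemma contractArc_relabel {g : OddXGraph} {f k : ℕ → ℕ} (hf : Function.Injective f) {i j : ℕ}
    (h : ∀ v, mergeMap (f i) (f j) (f v) = k (mergeMap i j v)) :
    (relabel f g).contractArc (f i) (f j) = relabel k (g.contractArc i j) := by
  unfold relabel contractArc
  simp only [OddXGraph.mk.injEq, true_and]
  simp only [Multiset.map_map, List.map_map]
  exact ⟨Multiset.map_congr rfl fun x _ => arcEdgeMap_emap hf h x,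
    List.map_congr_left fun x _ => h x⟩

lemma deleteCrossNat_relabel {g : OddXGraph} {f : ℕ → ℕ} {a : ℕ} (ha : a < g.crosses.length) :
    (relabel f g).deleteCrossNat a = relabel f (g.deleteCrossNat a) := by
  unfold relabel deleteCrossNat
  simp [ha, emap, List.eraseIdx_map]

lemma degX_relabel (f : ℕ → ℕ) (g : OddXGraph) : (relabel f g).degX = g.degX := by
  simp [degX, relabel, numEdges, numCrosses]

lemma oddXRel_relabel (g : OddXGraph) (π : Equiv.Perm (Fin g.vi)) (r : ℕ) (f : ℕ → ℕ)
    (hf : ∀ v, permVertexX g.ve g.vi π r v = f v) :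
    OddXRel g (relabel f g) (((Equiv.Perm.sign π : ℤ) : ℝ)
        * ((Equiv.Perm.sign (finRotate g.ve ^ r) : ℤ) : ℝ)) := by
  have e : permOEdgeX g.ve g.vi π r = emap f := by
    funext e
    simp [permOEdgeX, emap, hf]
  refine ⟨rfl, rfl, π, r, g.edges.map fun e => (emap f e, false), by simp [relabel], 1,
    ?_, ?_, ?_, ?_⟩
  · rw [Multiset.map_map, e]
    rfl
  · rw [Multiset.map_map]
    exact Multiset.map_congr rfl fun x _ => by simp
  · intro a
    simp [relabel, hf]
    rfl
  · have : (g.edges.map fun e => (emap f e, false)).filter (fun p => p.2 = true) = 0 := by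
      rw [Multiset.filter_eq_nil]
      intro a ha
      obtain ⟨b, _, rfl⟩ := Multiset.mem_map.1 ha
      simp
    simp [this]

lemma isRelabelling_swapLabel {g : OddXGraph} {k : ℕ} (h1 : g.ve ≤ k) (h2 : k + 1 < g.nv) :
    g.IsRelabelling (swapLabel k) (swapLabel k) where
  left := swapLabel_swapLabel k
  right := swapLabel_swapLabel k
  lt_ve v := by unfold swapLabel; split_ifs <;> omega
  lt_nv v := by unfold swapLabel; split_ifs <;> omega

lemma cls_swapLabel {g : OddXGraph} {k : ℕ} (h1 : g.ve ≤ k) (h2 : k + 1 < g.nv) :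
    cls g = (-1 : ℝ) • cls (relabel (swapLabel k) g) := by
  have h3 : g.nv = g.ve + g.vi := rfl
  set x : Fin g.vi := ⟨k - g.ve, by omega⟩ with hx
  set y : Fin g.vi := ⟨k + 1 - g.ve, by omega⟩ with hy
  have hxy : x ≠ y := by
    rw [hx, hy, Ne, Fin.mk.injEq]
    omega
  have := cls_eq_smul (oddXRel_relabel g (Equiv.swap x y) 0 (swapLabel k) fun v => by
    unfold permVertexX swapLabel
    split_ifs with c1 c2 c3 c4 c5 c6 c7
    · omega
    · omega
    · exact Nat.mod_eq_of_lt c1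
    · rw [show (⟨v - g.ve, c4⟩ : Fin g.vi) = x by rw [hx, Fin.mk.injEq]; omega,
        Equiv.swap_apply_left, hy]
      simp only
      omega
    · rw [show (⟨v - g.ve, c4⟩ : Fin g.vi) = y by rw [hy, Fin.mk.injEq]; omega,
        Equiv.swap_apply_right, hx]
      simp only
      omega
    · rw [Equiv.swap_apply_of_ne_of_ne]
      · simp only
        omega
      · rw [hx, Ne, Fin.mk.injEq]
        omega
      · rw [hy, Ne, Fin.mk.injEq]
        omega
    · omega
    · omega
    · rfl)
  rw [Equiv.Perm.sign_swap hxy] at this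
  simpa using this

lemma cob_swapLabel {g : OddXGraph} {k : ℕ} (h1 : g.ve ≤ k) (h2 : k + 1 < g.nv) :
    cob g = (-1 : ℝ) • cob (relabel (swapLabel k) g) := by
  have hinj : Function.Injective (swapLabel k) := fun a b hab => by
    by_contra hne
    exact swapLabel_ne hne hab
  have hext : ∀ v < g.ve, swapLabel k v = v := fun v hv => by
    unfold swapLabel; split_ifs <;> omega
  have harc : ∀ p ∈ g.arcs, (swapLabel k p.1, swapLabel k p.2) ∈ g.arcs := fun p hp => by
    obtain ⟨h3, h4, -⟩ := arc_props hp
    rwa [hext _ h3, hext _ h4]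
  refine (isRelabelling_swapLabel h1 h2).cob_eq_smul harc harc fun hg o ho => ?_
  rcases o with e | ⟨i, j⟩ | a
  · obtain ⟨he, hne, hreg, hs, ht⟩ := edge_props hg ho
    by_cases hm : max e.src e.tgt = k ∨ max e.src e.tgt = k + 1
    · have e1 : (relabel (swapLabel k) g).contractEdge (emap (swapLabel k) e) =
          relabel (fun v => v) (g.contractEdge e) :=
        contractEdge_relabel he fun v => mergeMap_swapLabel_of_max_eq hne hm v
      rw [relabel_eq_self fun _ => rfl] at e1
      simp only [sgn, app, opMap, e1]
      simp only [emap, csign_swapLabel_of_max_eq hm]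
      module
    · push Not at hm
      have e1 := contractEdge_relabel he fun v => mergeMap_swapLabel_of_max_ne hne hm.1 hm.2 v
      simp only [sgn, app, opMap, e1]
      simp only [emap, csign_swapLabel_of_max_ne hm.1 hm.2]
      rw [cls_swapLabel (k := if max e.src e.tgt < k then k - 1 else k)]
      · module
      · show g.ve ≤ _
        split_ifs <;> omega
      · show _ < g.ve + (g.vi - 1)
        unfold nv at h2
        split_ifs <;> omega
  · obtain ⟨hi, hj, hne, h3⟩ := arc_props (mem_ops_arc.1 ho)
    simp only at hi hj hne
    have e1 := contractArc_relabel (g := g) hinj fun v =>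
      mergeMap_swapLabel_of_max_ne (k := k) hne (by omega) (by omega) v
    simp only [sgn, app, opMap, e1]
    rw [csign_swapLabel_of_max_ne (by omega) (by omega), if_pos (by omega),
      cls_swapLabel (k := k - 1)]
    · module
    · show g.ve - 1 ≤ _
      omega
    · show _ < g.ve - 1 + g.vi
      unfold nv at h2
      omega
  · simp only [sgn, app, opMap, degX_relabel, deleteCrossNat_relabel (mem_ops_cross.1 ho)]
    rw [cls_swapLabel (k := k) (g := g.deleteCrossNat a) h1 h2]
    module

lemma isRelabelling_rotLabel {g : OddXGraph} :
    g.IsRelabelling (rotLabel g.ve) (rotLabelInv g.ve) where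
  left := rotLabelInv_rotLabel _
  right := rotLabel_rotLabelInv _
  lt_ve v := by unfold rotLabel; split_ifs <;> omega
  lt_nv v := by unfold rotLabel nv; split_ifs <;> omega

lemma sign_finRotate_real (n : ℕ) :
    ((Equiv.Perm.sign (finRotate n) : ℤ) : ℝ) = (-1) ^ (n - 1) := by
  rcases n with _ | n
  · simp
  · simp [sign_finRotate]

lemma permVertexX_rotLabel (n m v : ℕ) : permVertexX n m 1 1 v = rotLabel n v := by
  unfold permVertexX rotLabel
  split_ifs with h1 h2 h3 h4 h5 h6 <;> first | exact Nat.mod_eq_of_lt h2 | skip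
  · rw [h3, Nat.mod_self]
  all_goals first | omega | (simp; omega)

lemma cls_rotLabel (g : OddXGraph) :
    cls g = ((-1 : ℝ) ^ (g.ve - 1)) • cls (relabel (rotLabel g.ve) g) := by
  have := cls_eq_smul (oddXRel_relabel g 1 1 _ (permVertexX_rotLabel g.ve g.vi))
  rw [pow_one, sign_finRotate_real] at this
  simpa using this

lemma cob_rotLabel (g : OddXGraph) :
    cob g = ((-1 : ℝ) ^ (g.ve - 1)) • cob (relabel (rotLabel g.ve) g) := by
  have hinj : Function.Injective (rotLabel g.ve) := fun a b hab => by
    by_contra hne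
    exact rotLabel_ne hne hab
  have harc : ∀ p ∈ g.arcs, (rotLabel g.ve p.1, rotLabel g.ve p.2) ∈ g.arcs := fun p hp => by
    rw [mem_arcs] at hp ⊢
    unfold rotLabel
    simp only
    split_ifs <;> omega
  have harc' : ∀ p ∈ g.arcs, (rotLabelInv g.ve p.1, rotLabelInv g.ve p.2) ∈ g.arcs :=
    fun p hp => by
    rw [mem_arcs] at hp ⊢
    unfold rotLabelInv
    simp only
    split_ifs <;> omega
  refine isRelabelling_rotLabel.cob_eq_smul harc harc' fun hg o ho => ?_
  rcases o with e | ⟨i, j⟩ | a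
  · obtain ⟨he, hne, hreg, hs, ht⟩ := edge_props hg ho
    have e1 := contractEdge_relabel he fun v => mergeMap_rotLabel hne hreg v
    simp only [sgn, app, opMap, e1]
    simp only [emap, csign_rotLabel hreg]
    rw [cls_rotLabel (g.contractEdge e), smul_smul, smul_smul, mul_comm]
    rfl
  · rcases mem_arcs.1 (mem_ops_arc.1 ho) with ⟨h1, h2⟩ | ⟨h1, h2, h3⟩
    · simp only at h1 h2
      subst h2
      have e1 := contractArc_relabel (g := g) hinj fun v => mergeMap_rotLabel_arc h1 v
      simp only [sgn, app, opMap, e1]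
      rw [csign_rotLabel_arc h1, cls_rotLabel (g.contractArc i (i + 1)), smul_smul, smul_smul]
      congr 1
      show csign i (i + 1) * (-1) ^ (g.ve - 1 - 1) = _
      obtain ⟨n, hn⟩ : ∃ n, g.ve - 1 = n + 1 := ⟨g.ve - 2, by omega⟩
      rw [hn, pow_succ]
      simp
      ring
    · simp only at h2 h3
      subst h2 h3
      have e1 : (relabel (rotLabel g.ve) g).contractArc (rotLabel g.ve (g.ve - 1))
          (rotLabel g.ve 0) = relabel (fun v => v) (g.contractArc (g.ve - 1) 0) :=
        contractArc_relabel hinj fun v => mergeMap_rotLabel_last h1 v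
      rw [relabel_eq_self fun _ => rfl] at e1
      simp only [sgn, app, opMap, e1]
      rw [csign_rotLabel_last h1, smul_smul]
  · simp only [sgn, app, opMap, degX_relabel, deleteCrossNat_relabel (mem_ops_cross.1 ho)]
    rw [cls_rotLabel (g.deleteCrossNat a), smul_smul, smul_smul, mul_comm]
    rfl

lemma permVertexX_one_zero (n m v : ℕ) : permVertexX n m 1 0 v = v := by
  unfold permVertexX
  split_ifs with h1 h2
  · exact Nat.mod_eq_of_lt h1
  · simp only [Equiv.Perm.coe_one, id_eq]
    omega
  · rfl

lemma permOEdgeX_one_zero (n m : ℕ) : permOEdgeX n m 1 0 = id := by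
  funext e
  simp [permOEdgeX, permVertexX_one_zero]

lemma flipOEdgeX_flipOEdgeX (e : OEdge) : flipOEdgeX (flipOEdgeX e) = e := by
  obtain ⟨s, t, b⟩ := e
  unfold flipOEdgeX
  by_cases h : s = t
  · simp [h]
  · simp [h, Ne.symm h]

lemma par_flipOEdgeX (e : OEdge) : Par e (flipOEdgeX e) := by
  unfold flipOEdgeX Par
  split_ifs
  · exact Or.inl ⟨rfl, rfl⟩
  · exact Or.inr ⟨rfl, rfl⟩

lemma Par.trans {a b c : OEdge} (h : Par a b) (h' : Par b c) : Par a c := by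
  unfold Par at *; omega

lemma inc_congr {e f : OEdge} (h : Par e f) (v : ℕ) : inc v e = inc v f := by
  unfold inc
  rcases h with h | h <;> rw [h.1, h.2]
  rw [add_comm]

/-- `g'` is obtained from `g` by reversing one edge. -/
structure FlipAt (e : OEdge) (g g' : OddXGraph) : Prop where
  ve : g'.ve = g.ve
  vi : g'.vi = g.vi
  edges : ∃ E, g.edges = e ::ₘ E ∧ g'.edges = flipOEdgeX e ::ₘ E
  crosses : g'.crosses = g.crosses

namespace FlipAt

variable {e : OEdge} {g g' : OddXGraph}

lemma symm (h : FlipAt e g g') : FlipAt (flipOEdgeX e) g' g where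
  ve := h.ve.symm
  vi := h.vi.symm
  edges := by
    obtain ⟨E, h1, h2⟩ := h.edges
    exact ⟨E, h2, by rw [flipOEdgeX_flipOEdgeX, h1]⟩
  crosses := h.crosses.symm

lemma oddXRel (h : FlipAt e g g') : OddXRel g g' (-1) := by
  obtain ⟨E, h1, h2⟩ := h.edges
  refine ⟨h.ve, h.vi, 1, 0, (e, true) ::ₘ E.map (fun f => (f, false)),
    congrArg List.length h.crosses, 1, ?_, ?_, ?_, ?_⟩
  · rw [permOEdgeX_one_zero, h1]
    simp
  · rw [h2]
    simp
  · intro a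
    simp [permVertexX_one_zero, h.crosses]
  · have : (E.map fun f => (f, false)).filter (fun p => p.2 = true) = 0 := by
      rw [Multiset.filter_eq_nil]
      intro a ha
      obtain ⟨b, _, rfl⟩ := Multiset.mem_map.1 ha
      simp
    simp [this]

lemma cls_eq (h : FlipAt e g g') : cls g = (-1 : ℝ) • cls g' := cls_eq_smul h.oddXRel

lemma degX_eq (h : FlipAt e g g') : g'.degX = g.degX := by
  obtain ⟨E, h1, h2⟩ := h.edges
  simp [degX, numEdges, numCrosses, h1, h2, h.ve, h.vi, h.crosses]

lemma nonzero (h : FlipAt e g g') (hg : g.Nonzero) : g'.Nonzero := by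
  obtain ⟨E, h1, h2⟩ := h.edges
  obtain ⟨⟨hv1, hv2, hv3, hv4, hv5, hv6⟩, hd, hl⟩ := id hg
  have hval : ∀ v, g'.valence v = g.valence v := fun v => by
    simp [valence_eq, h1, h2, inc_congr (par_flipOEdgeX e)]
  have hnv : g'.nv = g.nv := by unfold nv; rw [h.ve, h.vi]
  have hpar := par_flipOEdgeX e
  rw [h1] at hv1 hv2
  refine ⟨⟨?_, ?_, ?_, ?_, ?_, ?_⟩, ?_, ?_⟩
  · intro f hf
    rw [hnv]
    rw [h2, Multiset.mem_cons] at hf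
    rcases hf with rfl | hf
    · have := hv1 e (Multiset.mem_cons_self _ _)
      rcases hpar with hp | hp <;> rw [hp.1, hp.2]
      · exact this
      · exact this.symm
    · exact hv1 f (Multiset.mem_cons_of_mem hf)
  · intro f hf hne
    rw [h2, Multiset.mem_cons] at hf
    rcases hf with rfl | hf
    · have h3 := hv2 e (Multiset.mem_cons_self _ _)
      by_cases h4 : e.src = e.tgt
      · exact absurd h4 (by rcases hpar with hp | hp <;> rw [hp.1, hp.2] at hne <;> omega)
      · unfold flipOEdgeX
        rw [if_neg h4]
        exact h3 h4
    · exact hv2 f (Multiset.mem_cons_of_mem hf) hne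
  · intro v h3 h4
    rw [hval]
    exact hv3 v (h.ve ▸ h3) (hnv ▸ h4)
  · intro v h3
    rw [hval, h.crosses]
    exact hv4 v (h.ve ▸ h3)
  · rw [h.crosses, h.ve]
    exact hv5
  · refine connected_of_map id hv6 (fun w hw => ⟨w, hnv ▸ hw, rfl⟩) ?_
    rintro a b (⟨f, hf, h3⟩ | h3)
    · right; left
      rw [h1, Multiset.mem_cons] at hf
      rcases hf with rfl | hf
      · refine ⟨flipOEdgeX f, by rw [h2]; exact Multiset.mem_cons_self _ _, ?_⟩
        simp only [id]
        rcases hpar with hp | hp <;> rw [hp.1, hp.2]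
        · exact h3
        · tauto
      · exact ⟨f, by rw [h2]; exact Multiset.mem_cons_of_mem hf, h3⟩
    · right; right
      rw [h.ve]
      exact h3
  · intro hd'
    have hd' : Dbl g'.edges := hd'
    apply hd
    have : g'.edges = g.edges.map fun f => if f = e then flipOEdgeX f else f := by
      have he : e ∉ E := by
        have := hg.nodup
        rw [h1, Multiset.nodup_cons] at this
        exact this.1
      rw [h1, h2, Multiset.map_cons, if_pos rfl]
      congr 1
      refine Eq.trans (Multiset.map_id E).symm (Multiset.map_congr rfl fun f hf => ?_)
      rw [if_neg (by rintro rfl; exact he hf)]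
      rfl
    rw [this, dbl_map_iff] at hd'
    obtain ⟨a, ha, b, hb, hab⟩ := hd'
    have hP : ∀ f, Par f (if f = e then flipOEdgeX f else f) := fun f => by
      split_ifs
      · exact par_flipOEdgeX f
      · exact Or.inl ⟨rfl, rfl⟩
    exact ⟨a, ha, b, hb, ((hP a).trans hab).trans (hP b).symm⟩
  · rintro ⟨f, hf, h3, h4⟩
    rw [h.ve] at h4
    rw [h2, Multiset.mem_cons] at hf
    rcases hf with rfl | hf
    · refine hl ⟨e, by rw [h1]; exact Multiset.mem_cons_self _ _, ?_⟩
      rcases hpar with hp | hp <;> rw [hp.1, hp.2] at h3 <;> rw [hp.1] at h4 <;> omega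
    · exact hl ⟨f, by rw [h1]; exact Multiset.mem_cons_of_mem hf, h3, h4⟩

end FlipAt

/-- The action of the reversal of `e` on the places where the coboundary acts. -/
noncomputable def opFlip (e : OEdge) : Op → Op
  | Sum.inl f => Sum.inl (if f = e then flipOEdgeX e else f)
  | Sum.inr o => Sum.inr o

lemma emap_flipOEdgeX {f : ℕ → ℕ} {e : OEdge} (h : f e.src = f e.tgt → e.src = e.tgt) :
    emap f (flipOEdgeX e) = flipOEdgeX (emap f e) := by
  unfold flipOEdgeX emap
  by_cases h1 : e.src = e.tgt
  · simp [h1]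
  · have : ¬f e.src = f e.tgt := fun h2 => h1 (h h2)
    simp [h1, this]

lemma arcEdgeMap_flipOEdgeX {i j : ℕ} (hij : i ≠ j) (e : OEdge) :
    arcEdgeMap i j (flipOEdgeX e) = flipOEdgeX (arcEdgeMap i j e) := by
  obtain ⟨s, t, b⟩ := e
  by_cases h1 : s = i ∧ t = j
  · obtain ⟨rfl, rfl⟩ := h1
    simp [flipOEdgeX, arcEdgeMap, hij, hij.symm]
  by_cases h2 : s = j ∧ t = i
  · obtain ⟨rfl, rfl⟩ := h2
    simp [flipOEdgeX, arcEdgeMap, hij, hij.symm]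
  have h3 : ¬(t = i ∧ s = j) := by tauto
  have h4 : ¬(t = j ∧ s = i) := by tauto
  by_cases h : s = t
  · subst h
    simp [flipOEdgeX, arcEdgeMap, h1, h2]
  · have h5 : mergeMap i j s ≠ mergeMap i j t := by
      rw [Ne, mergeMap_eq_iff hij]; tauto
    simp [flipOEdgeX, arcEdgeMap, h1, h2, h3, h4, h, h5]

lemma opFlip_mem {e : OEdge} {g g' : OddXGraph} (h : FlipAt e g g') (o : Op) (ho : o ∈ g.ops) :
    opFlip e o ∈ g'.ops := by
  obtain ⟨E, h1, h2⟩ := h.edges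
  rcases o with f | p | a
  · obtain ⟨h3, h4, h5⟩ := mem_ops_edge.1 ho
    refine mem_ops_edge.2 ?_
    split_ifs with h6
    · subst h6
      refine ⟨by rw [h2]; exact Multiset.mem_cons_self _ _, ?_⟩
      unfold isRegular
      rw [h.ve]
      rcases par_flipOEdgeX f with hp | hp <;> rw [hp.1, hp.2]
      · exact ⟨h4, h5⟩
      · exact ⟨h4.symm, by tauto⟩
    · rw [h1, Multiset.mem_cons] at h3
      refine ⟨by rw [h2]; exact Multiset.mem_cons_of_mem (h3.resolve_left h6), h4, ?_⟩
      rw [h.ve]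
      exact h5
  · refine mem_ops_arc.2 ?_
    rw [mem_arcs, h.ve, ← mem_arcs]
    exact mem_ops_arc.1 ho
  · refine mem_ops_cross.2 ?_
    rw [h.crosses]
    exact mem_ops_cross.1 ho

lemma opFlip_opFlip {e : OEdge} {g : OddXGraph} (hg : g.Nonzero) (he : e ∈ g.edges) (o : Op)
    (ho : o ∈ g.ops) : opFlip (flipOEdgeX e) (opFlip e o) = o := by
  rcases o with f | o
  · obtain ⟨h3, h4, h5⟩ := mem_ops_edge.1 ho
    unfold opFlip
    simp only
    by_cases h6 : f = e
    · simp [h6, flipOEdgeX_flipOEdgeX]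
    · have h7 : f ≠ flipOEdgeX e := by
        rintro rfl
        exact not_par hg he ((Multiset.mem_erase_of_ne h6).2 h3) (par_flipOEdgeX e)
      simp [h6, h7]
  · rfl

lemma FlipAt.cob_eq {e : OEdge} {g g' : OddXGraph} (h : FlipAt e g g') :
    cob g = (-1 : ℝ) • cob g' := by
  have hmem : e ∈ g.edges := by
    obtain ⟨E, h1, h2⟩ := h.edges
    rw [h1]
    exact Multiset.mem_cons_self _ _
  have hmem' : flipOEdgeX e ∈ g'.edges := by
    obtain ⟨E, h1, h2⟩ := h.edges
    rw [h2]
    exact Multiset.mem_cons_self _ _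
  refine cob_eq_smul_of_bij (opFlip e) (opFlip (flipOEdgeX e)) ⟨h.nonzero, h.symm.nonzero⟩
    (fun _ => opFlip_mem h) (fun _ => opFlip_mem h.symm) (fun hg => opFlip_opFlip hg hmem)
    (fun hg o ho => ?_) fun hg o ho => ?_
  · have := opFlip_opFlip (h.nonzero hg) hmem' o ho
    rwa [flipOEdgeX_flipOEdgeX] at this
  obtain ⟨E, h1, h2⟩ := h.edges
  rcases o with f | ⟨i, j⟩ | a
  · obtain ⟨hf, hne, hreg, hs, ht⟩ := edge_props hg ho
    by_cases hfe : f = e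
    · subst hfe
      have e0 : flipOEdgeX f = ⟨f.tgt, f.src, f.lp⟩ := by
        unfold flipOEdgeX
        rw [if_neg hne]
      have e1 : g'.contractEdge (flipOEdgeX f) = g.contractEdge f := by
        have e2 : mergeMap f.tgt f.src = mergeMap f.src f.tgt := by
          funext v
          rw [mergeMap_comm]
        unfold contractEdge
        rw [h.ve, h.vi, h1, h2, h.crosses, Multiset.erase_cons_head, Multiset.erase_cons_head, e0]
        simp only [e2]
      simp only [sgn, app, opFlip, if_true, e1]
      simp only [e0, csign_swap hne]
      module
    · have h3 : FlipAt (emap (mergeMap f.src f.tgt) e) (g.contractEdge f) (g'.contractEdge f) := by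
        refine ⟨h.ve, congrArg (· - 1) h.vi,
          ⟨(E.erase f).map (emap (mergeMap f.src f.tgt)), ?_, ?_⟩, ?_⟩
        · show (g.edges.erase f).map (emap (mergeMap f.src f.tgt)) = _
          rw [h1, Multiset.erase_cons_tail _ (Ne.symm hfe), Multiset.map_cons]
        · show (g'.edges.erase f).map (emap (mergeMap f.src f.tgt)) = _
          have h4 : flipOEdgeX e ≠ f := by
            rintro rfl
            exact not_par hg hmem ((Multiset.mem_erase_of_ne hfe).2 hf) (par_flipOEdgeX e)
          rw [h2, Multiset.erase_cons_tail _ h4, Multiset.map_cons, emap_flipOEdgeX]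
          intro h5
          have h6 : ¬Par f e :=
            not_par hg hf ((Multiset.mem_erase_of_ne (Ne.symm hfe)).2 hmem)
          unfold Par at h6
          rw [mergeMap_eq_iff hne] at h5
          tauto
        · show g'.crosses.map _ = g.crosses.map _
          rw [h.crosses]
      simp only [sgn, app, opFlip, if_neg hfe, h3.cls_eq]
      module
  · obtain ⟨hi, hj, hne, h3⟩ := arc_props (mem_ops_arc.1 ho)
    simp only at hi hj hne
    have h3 : FlipAt (arcEdgeMap i j e) (g.contractArc i j) (g'.contractArc i j) := by
      refine ⟨congrArg (· - 1) h.ve, h.vi, ⟨E.map (arcEdgeMap i j), ?_, ?_⟩, ?_⟩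
      · show g.edges.map (arcEdgeMap i j) = _
        rw [h1, Multiset.map_cons]
      · show g'.edges.map (arcEdgeMap i j) = _
        rw [h2, Multiset.map_cons, arcEdgeMap_flipOEdgeX hne]
      · show g'.crosses.map _ = g.crosses.map _
        rw [h.crosses]
    simp only [sgn, app, opFlip, h3.cls_eq]
    module
  · have h3 : FlipAt e (g.deleteCrossNat a) (g'.deleteCrossNat a) := by
      refine ⟨h.ve, h.vi, ⟨⟨g.crosses[a]?.getD 0, g.crosses[a]?.getD 0, false⟩ ::ₘ E, ?_, ?_⟩, ?_⟩
      · unfold deleteCrossNat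
        simp only
        rw [h1, Multiset.cons_swap]
      · unfold deleteCrossNat
        simp only
        rw [h2, h.crosses, Multiset.cons_swap]
      · unfold deleteCrossNat
        simp only
        rw [h.crosses]
    simp only [sgn, app, opFlip, h3.cls_eq, h.degX_eq]
    module

lemma eq_of_components {g g' : OddXGraph} (h1 : g.ve = g'.ve) (h2 : g.vi = g'.vi)
    (h3 : g.edges = g'.edges) (h4 : g.crosses = g'.crosses) : g = g' := by
  cases g
  cases g'
  simp_all

lemma neg_one_zpow_add_one (n : ℤ) : (-1 : ℝ) ^ (n + 1) = -(-1) ^ n := by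
  rw [zpow_add_one₀ (by norm_num)]
  ring

/-- `g'` is obtained from `g` by exchanging the crosses `i` and `i + 1`. -/
structure CrossSwap (i : ℕ) (g g' : OddXGraph) : Prop where
  ve : g'.ve = g.ve
  vi : g'.vi = g.vi
  edges : g'.edges = g.edges
  length : g'.crosses.length = g.crosses.length
  lt : i + 1 < g.crosses.length
  get : ∀ j, g'.crosses[swapLabel i j]? = g.crosses[j]?

namespace CrossSwap

variable {i : ℕ} {g g' : OddXGraph}

lemma symm (h : CrossSwap i g g') : CrossSwap i g' g where
  ve := h.ve.symm
  vi := h.vi.symm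
  edges := h.edges.symm
  length := h.length.symm
  lt := h.length ▸ h.lt
  get j := by rw [← h.get, swapLabel_swapLabel]

lemma mem_iff (h : CrossSwap i g g') {c : ℕ} : c ∈ g'.crosses ↔ c ∈ g.crosses := by
  rw [List.mem_iff_getElem?, List.mem_iff_getElem?]
  constructor
  · rintro ⟨j, hj⟩
    exact ⟨swapLabel i j, by rwa [h.symm.get]⟩
  · rintro ⟨j, hj⟩
    exact ⟨swapLabel i j, by rwa [h.get]⟩

lemma degX_eq (h : CrossSwap i g g') : g'.degX = g.degX := by
  simp [degX, numEdges, numCrosses, h.edges, h.ve, h.vi, h.length]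

lemma nonzero (h : CrossSwap i g g') (hg : g.Nonzero) : g'.Nonzero := by
  obtain ⟨⟨hv1, hv2, hv3, hv4, hv5, hv6⟩, hd, hl⟩ := hg
  have hnv : g'.nv = g.nv := by unfold nv; rw [h.ve, h.vi]
  have hval : g'.valence = g.valence := by unfold valence; rw [h.edges]
  have hadj : g'.adj = g.adj := by unfold adj; rw [h.edges, h.ve]
  refine ⟨⟨?_, ?_, ?_, ?_, ?_, ?_⟩, ?_, ?_⟩
  · rwa [h.edges, hnv]
  · rwa [h.edges]
  · rwa [h.ve, hnv, hval]
  · simpa only [h.ve, hval, h.mem_iff] using hv4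
  · simpa only [h.mem_iff, h.ve] using hv5
  · unfold Connected
    rwa [hnv, hadj]
  · unfold hasDoubleEdge
    rwa [h.edges]
  · unfold hasInternalLoop
    rwa [h.edges, h.ve]

lemma oddXRel (h : CrossSwap i g g') : OddXRel g g' (-1) := by
  have hi := h.lt
  set x : Fin g.crosses.length := ⟨i, by omega⟩ with hx
  set y : Fin g.crosses.length := ⟨i + 1, hi⟩ with hy
  have hxy : x ≠ y := by
    rw [hx, hy, Ne, Fin.mk.injEq]
    omega
  have hsw : ∀ a : Fin g.crosses.length, (Equiv.swap x y a : ℕ) = swapLabel i a := fun a => by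
    unfold swapLabel
    rw [Equiv.swap_apply_def]
    simp only [hx, hy, Fin.ext_iff]
    split_ifs <;> rfl
  refine ⟨h.ve, h.vi, 1, 0, g.edges.map fun e => (e, false), h.length, Equiv.swap x y,
    ?_, ?_, ?_, ?_⟩
  · rw [permOEdgeX_one_zero, Multiset.map_map]
    rfl
  · rw [h.edges]
    simp
  · intro a
    have := h.get a
    rw [← hsw] at this
    simp only [permVertexX_one_zero, List.get_eq_getElem, Fin.val_cast]
    rw [List.getElem?_eq_getElem (by rw [h.length]; exact Fin.is_lt _),
      List.getElem?_eq_getElem a.is_lt] at this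
    exact Option.some.inj this
  · have : (g.edges.map fun f => (f, false)).filter (fun p => p.2 = true) = 0 := by
      rw [Multiset.filter_eq_nil]
      intro a ha
      obtain ⟨b, _, rfl⟩ := Multiset.mem_map.1 ha
      simp
    simp [this, Equiv.Perm.sign_swap hxy]

lemma cls_eq (h : CrossSwap i g g') : cls g = (-1 : ℝ) • cls g' := cls_eq_smul h.oddXRel

end CrossSwap

/-- The exchange of two consecutive crosses on the places where the coboundary acts. -/
def opCrossSwap (i : ℕ) : Op → Op
  | Sum.inl f => Sum.inl f
  | Sum.inr (Sum.inl p) => Sum.inr (Sum.inl p)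
  | Sum.inr (Sum.inr a) => Sum.inr (Sum.inr (swapLabel i a))

lemma opCrossSwap_opCrossSwap (i : ℕ) (o : Op) : opCrossSwap i (opCrossSwap i o) = o := by
  rcases o with f | p | a <;> simp [opCrossSwap, swapLabel_swapLabel]

lemma opCrossSwap_mem {i : ℕ} {g g' : OddXGraph} (h : CrossSwap i g g') (o : Op)
    (ho : o ∈ g.ops) : opCrossSwap i o ∈ g'.ops := by
  rcases o with f | p | a
  · refine mem_ops_edge.2 ?_
    unfold isRegular
    rw [h.edges, h.ve]
    exact mem_ops_edge.1 ho
  · refine mem_ops_arc.2 ?_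
    rw [mem_arcs, h.ve, ← mem_arcs]
    exact mem_ops_arc.1 ho
  · refine mem_ops_cross.2 ?_
    rw [h.length]
    have := mem_ops_cross.1 ho
    have := h.lt
    unfold swapLabel
    split_ifs <;> omega

lemma CrossSwap.cob_eq {i : ℕ} {g g' : OddXGraph} (h : CrossSwap i g g') :
    cob g = (-1 : ℝ) • cob g' := by
  refine cob_eq_smul_of_bij (opCrossSwap i) (opCrossSwap i) ⟨h.nonzero, h.symm.nonzero⟩
    (fun _ => opCrossSwap_mem h) (fun _ => opCrossSwap_mem h.symm)
    (fun _ o _ => opCrossSwap_opCrossSwap i o) (fun _ o _ => opCrossSwap_opCrossSwap i o)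
    fun hg o ho => ?_
  have hlt := h.lt
  rcases o with f | p | a
  · have h3 : CrossSwap i (g.contractEdge f) (g'.contractEdge f) :=
      ⟨h.ve, congrArg (· - 1) h.vi, by unfold contractEdge; simp only [h.edges],
        by simp [contractEdge, h.length], by simpa [contractEdge] using h.lt,
        fun j => by simp [contractEdge, h.get]⟩
    simp only [sgn, app, opCrossSwap, h3.cls_eq]
    module
  · have h3 : CrossSwap i (g.contractArc p.1 p.2) (g'.contractArc p.1 p.2) :=
      ⟨congrArg (· - 1) h.ve, h.vi, by unfold contractArc; simp only [h.edges],
        by simp [contractArc, h.length], by simpa [contractArc] using h.lt,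
        fun j => by simp [contractArc, h.get]⟩
    simp only [sgn, app, opCrossSwap, h3.cls_eq]
    module
  · have ha := mem_ops_cross.1 ho
    have hsw : swapLabel i a < g'.crosses.length := mem_ops_cross.1 (opCrossSwap_mem h _ ho)
    have hl : (g.deleteCrossNat a).crosses.length = g.crosses.length - 1 := by
      simp [deleteCrossNat, List.length_eraseIdx, ha]
    have hl' : (g'.deleteCrossNat (swapLabel i a)).crosses.length = g.crosses.length - 1 := by
      simp only [deleteCrossNat, List.length_eraseIdx]
      rw [if_pos hsw, h.length]
    have he : (g'.deleteCrossNat (swapLabel i a)).edges = (g.deleteCrossNat a).edges := by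
      unfold deleteCrossNat
      simp only [h.edges, h.get]
    by_cases hai : a = i ∨ a = i + 1
    · have h3 : g'.deleteCrossNat (swapLabel i a) = g.deleteCrossNat a := by
        refine eq_of_components h.ve h.vi he (List.ext_getElem? fun j => ?_)
        simp only [deleteCrossNat, List.getElem?_eraseIdx, ← h.symm.get]
        unfold swapLabel
        split_ifs <;> first | omega | rfl | (congr 1; omega)
      simp only [sgn, app, opCrossSwap, h3, h.degX_eq]
      rw [smul_smul]
      congr 1
      rcases hai with rfl | rfl
      · rw [show swapLabel a a = a + 1 by simp [swapLabel]]
        push_cast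
        rw [show g.degX + (a + 1 : ℤ) + 1 = g.degX + a + 1 + 1 by ring,
          neg_one_zpow_add_one (_ + 1),
          neg_mul_neg, one_mul]
      · rw [show swapLabel i (i + 1) = i by simp [swapLabel]]
        push_cast
        rw [show g.degX + (i + 1 : ℤ) + 1 = g.degX + i + 1 + 1 by ring, neg_one_zpow_add_one]
        ring
    · push Not at hai
      have hsa : swapLabel i a = a := by unfold swapLabel; split_ifs <;> omega
      rw [hsa] at he hl'
      have h3 : CrossSwap (if a < i then i - 1 else i) (g.deleteCrossNat a)
          (g'.deleteCrossNat a) := by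
        refine ⟨h.ve, h.vi, he, hl'.trans hl.symm, ?_, fun j => ?_⟩
        · rw [hl]
          split_ifs <;> omega
        · simp only [deleteCrossNat, List.getElem?_eraseIdx, ← h.symm.get]
          unfold swapLabel
          split_ifs <;> first | omega | rfl | (congr 1; omega)
      simp only [sgn, app, opCrossSwap, hsa, h3.cls_eq, h.degX_eq]
      module

lemma permVertexX_mul (n m : ℕ) (π σ : Equiv.Perm (Fin m)) (v : ℕ) :
    permVertexX n m (π * σ) 0 v = permVertexX n m π 0 (permVertexX n m σ 0 v) := by
  unfold permVertexX
  by_cases h1 : v < n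
  · simp [h1, Nat.mod_eq_of_lt]
  · by_cases h2 : v - n < m
    · have h3 : n + ((σ ⟨v - n, h2⟩ : Fin m) : ℕ) - n = (σ ⟨v - n, h2⟩ : Fin m) := by omega
      simp [h1, h2]
    · simp [h1, h2]

lemma permVertexX_swap (n m : ℕ) (i : Fin m) (v : ℕ) :
    permVertexX n (m + 1) (Equiv.swap i.castSucc i.succ) 0 v = swapLabel (n + i) v := by
  unfold permVertexX swapLabel
  have hi := i.is_lt
  split_ifs with c1 c2 c3 c4 c5 c6
  · omega
  · omega
  · exact Nat.mod_eq_of_lt c1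
  all_goals
    first
    | omega
    | rw [Equiv.swap_apply_def]
      simp only [Fin.ext_iff, Fin.val_castSucc, Fin.val_succ]
      split_ifs <;> simp only [Fin.val_castSucc, Fin.val_succ] <;> omega

lemma permVertexX_succ (n m : ℕ) (π : Equiv.Perm (Fin m)) (r v : ℕ) :
    permVertexX n m π (r + 1) v = rotLabel n (permVertexX n m π r v) := by
  unfold permVertexX rotLabel
  by_cases h1 : v < n
  · have h2 := Nat.mod_lt (v + r) (show 0 < n by omega)
    simp only [if_pos h1]
    rw [← add_assoc, Nat.add_mod]
    split_ifs with h3 h4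
    · rcases Nat.lt_or_ge 1 n with h5 | h5
      · rw [Nat.mod_eq_of_lt h5, Nat.mod_eq_of_lt h3]
      · omega
    · rcases Nat.lt_or_ge 1 n with h5 | h5
      · rw [Nat.mod_eq_of_lt h5, h4, Nat.mod_self]
      · obtain rfl : n = 1 := by omega
        omega
    · omega
  · simp only [if_neg h1]
    split_ifs <;> omega

lemma cob_permVertexX_internal (m : ℕ) (π : Equiv.Perm (Fin m)) :
    ∀ g : OddXGraph, g.vi = m → cob g =
      ((Equiv.Perm.sign π : ℤ) : ℝ) • cob (relabel (permVertexX g.ve m π 0) g) := by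
  rcases m with _ | m
  · intro g hg
    rw [Subsingleton.elim π 1, relabel_eq_self (permVertexX_one_zero _ _)]
    simp
  have hπ : π ∈ Submonoid.closure (Set.range fun i : Fin m => Equiv.swap i.castSucc i.succ) := by
    rw [Equiv.Perm.mclosure_swap_castSucc_succ]
    exact Submonoid.mem_top π
  induction hπ using Submonoid.closure_induction with
  | mem π h =>
    obtain ⟨i, rfl⟩ := h
    intro g hg
    have := i.is_lt
    rw [funext (permVertexX_swap g.ve m i), cob_swapLabel (k := g.ve + i) (by omega)
      (by unfold nv; omega), Equiv.Perm.sign_swap (Fin.castSucc_lt_succ).ne]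
    simp
  | one =>
    intro g hg
    rw [relabel_eq_self (permVertexX_one_zero _ _)]
    simp
  | mul π σ _ _ hπ hσ =>
    intro g hg
    have h := hπ (relabel (permVertexX g.ve (m + 1) σ 0) g) hg
    rw [relabel_relabel] at h
    rw [hσ g hg, h, smul_smul, funext (permVertexX_mul g.ve (m + 1) π σ)]
    congr 1
    simp [mul_comm]

lemma cob_permVertexX (r : ℕ) (g : OddXGraph) (π : Equiv.Perm (Fin g.vi)) : cob g =
    (((Equiv.Perm.sign π : ℤ) : ℝ) * ((Equiv.Perm.sign (finRotate g.ve ^ r) : ℤ) : ℝ)) •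
      cob (relabel (permVertexX g.ve g.vi π r) g) := by
  induction r with
  | zero => simpa using cob_permVertexX_internal g.vi π g rfl
  | succ r ih =>
    rw [ih, cob_rotLabel (relabel _ g), relabel_relabel, smul_smul,
      funext (permVertexX_succ g.ve g.vi π r), pow_succ, map_mul]
    show (_ * (-1) ^ (g.ve - 1)) • _ = _
    rw [← sign_finRotate_real]
    push_cast
    rw [← mul_assoc]
    rfl

lemma cob_flips (F : Multiset (OEdge × Bool)) : ∀ (n m : ℕ) (A : Multiset OEdge) (c : List ℕ),
    cob ⟨n, m, A + F.map Prod.fst, c⟩ =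
      ((-1 : ℝ) ^ Multiset.card (F.filter fun p => p.2 = true)) •
        cob ⟨n, m, A + F.map (fun p => if p.2 then flipOEdgeX p.1 else p.1), c⟩ := by
  induction F using Multiset.induction_on with
  | empty => simp
  | cons p F ih =>
    intro n m A c
    obtain ⟨e, b⟩ := p
    rcases b with _ | _
    · have := ih n m (e ::ₘ A) c
      simpa using this
    · have h : FlipAt e ⟨n, m, e ::ₘ (A + F.map Prod.fst), c⟩
          ⟨n, m, flipOEdgeX e ::ₘ (A + F.map Prod.fst), c⟩ := ⟨rfl, rfl, ⟨_, rfl, rfl⟩, rfl⟩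
      have h1 := ih n m (flipOEdgeX e ::ₘ A) c
      rw [Multiset.cons_add] at h1
      simp only [Multiset.map_cons, Multiset.add_cons]
      rw [h.cob_eq, h1]
      simp [pow_succ]

lemma cob_cross_perm (n : ℕ) (ρ : Equiv.Perm (Fin n)) (a b : ℕ) (E : Multiset OEdge) :
    ∀ l l' : List ℕ, l.length = n → l'.length = n → (∀ i : Fin n, l'[ρ i]? = l[i]?) →
      cob ⟨a, b, E, l⟩ = ((Equiv.Perm.sign ρ : ℤ) : ℝ) • cob ⟨a, b, E, l'⟩ := by
  rcases n with _ | n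
  · intro l l' hl hl' _
    rw [List.length_eq_zero_iff.1 hl, List.length_eq_zero_iff.1 hl', Subsingleton.elim ρ 1]
    simp
  have hρ : ρ ∈ Submonoid.closure (Set.range fun i : Fin n => Equiv.swap i.castSucc i.succ) := by
    rw [Equiv.Perm.mclosure_swap_castSucc_succ]
    exact Submonoid.mem_top ρ
  induction hρ using Submonoid.closure_induction with
  | mem ρ h =>
    obtain ⟨i, rfl⟩ := h
    intro l l' hl hl' h
    have := i.is_lt
    have hsw : ∀ a : Fin (n + 1), (Equiv.swap i.castSucc i.succ a : ℕ) = swapLabel i a :=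
      fun a => by
        unfold swapLabel
        rw [Equiv.swap_apply_def]
        simp only [Fin.ext_iff, Fin.val_castSucc, Fin.val_succ]
        split_ifs <;> rfl
    have hc : CrossSwap i ⟨a, b, E, l⟩ ⟨a, b, E, l'⟩ := by
      refine ⟨rfl, rfl, rfl, hl'.trans hl.symm, by simp only; omega, fun j => ?_⟩
      by_cases hj : j < n + 1
      · have := h ⟨j, hj⟩
        rw [← hsw ⟨j, hj⟩]
        exact this
      · have : swapLabel i j = j := by unfold swapLabel; split_ifs <;> omega
        rw [this, List.getElem?_eq_none (by simp only; omega),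
          List.getElem?_eq_none (by simp only; omega)]
    rw [hc.cob_eq, Equiv.Perm.sign_swap (Fin.castSucc_lt_succ).ne]
    simp
  | one =>
    intro l l' hl hl' h
    have : l' = l := by
      refine List.ext_getElem? fun j => ?_
      by_cases hj : j < n + 1
      · exact h ⟨j, hj⟩
      · rw [List.getElem?_eq_none (by omega), List.getElem?_eq_none (by omega)]
    simp [this]
  | mul ρ σ _ _ hρ hσ =>
    intro l l' hl hl' h
    have hofn : ∀ i : Fin (n + 1),
        (List.ofFn fun i : Fin (n + 1) => l'[ρ i])[i]? = l'[ρ i]? := fun i => by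
      rw [Fin.getElem?_fin, List.getElem?_ofFn, dif_pos i.is_lt]
      simp
    have h1 := hσ l (List.ofFn fun i : Fin (n + 1) => l'[ρ i]) hl (by simp) fun i =>
      (hofn _).trans (h i)
    have h2 := hρ (List.ofFn fun i : Fin (n + 1) => l'[ρ i]) l' (by simp) hl' fun i =>
      (hofn i).symm
    rw [h1, h2, smul_smul]
    congr 1
    simp [mul_comm]

/-- The coboundary is compatible with the sign relations. -/
lemma cob_eq_smul {g g' : OddXGraph} {ε : ℝ} (h : OddXRel g g' ε) : cob g = ε • cob g' := by
  obtain ⟨h1, h2, π, r, F, hc, ρ, hF1, hF2, hρ, rfl⟩ := h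
  obtain ⟨ve', vi', E', l'⟩ := g'
  simp only at h1 h2 hF2 hc
  subst h1 h2 hF2
  have e1 : relabel (permVertexX g.ve g.vi π r) g = ⟨g.ve, g.vi, 0 + F.map Prod.fst,
      g.crosses.map (permVertexX g.ve g.vi π r)⟩ := by
    rw [zero_add, hF1]
    rfl
  rw [cob_permVertexX r g π, e1, cob_flips, zero_add, cob_cross_perm g.crosses.length ρ _ _ _
    (g.crosses.map (permVertexX g.ve g.vi π r)) l' (by simp) hc fun i => ?_, smul_smul, smul_smul,
    mul_assoc, mul_assoc]
  have := hρ i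
  simp only [List.get_eq_getElem, Fin.val_cast] at this
  simpa [hc] using this

end OddXGraph

/-- An antisymmetric double sum vanishes, up to exceptional terms which vanish separately. -/
lemma sum_sum_eq_zero_of_antisymm {ι M : Type*} [AddCommGroup M] [Module ℝ M] (S : Finset ι)
    (W : ι → ι → M) (P : ι → ι → Prop)
    (h1 : ∀ s ∈ S, ∀ t ∈ S, ¬P s t → ¬P t s → W s t = -W t s)
    (h2 : ∀ s ∈ S, ∀ t ∈ S, P s t → W t s = 0)
    (h3 : ∀ t ∈ S, ∑ s ∈ S.filter (fun s => P s t), W s t = 0) :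
    ∑ s ∈ S, ∑ t ∈ S, W s t = 0 := by
  have e : ∀ s ∈ S, ∀ t ∈ S, W s t =
      (if P s t ∨ P t s then 0 else W s t) + (if P s t then W s t else 0) := by
    intro s hs t ht
    by_cases c1 : P s t
    · simp [c1]
    · by_cases c2 : P t s
      · simp [c1, c2, h2 t ht s hs c2]
      · simp [c1, c2]
  have e1 : ∑ s ∈ S, ∑ t ∈ S, (if P s t ∨ P t s then 0 else W s t) = 0 := by
    have : ∑ s ∈ S, ∑ t ∈ S, (if P s t ∨ P t s then 0 else W s t) =
        -∑ s ∈ S, ∑ t ∈ S, (if P s t ∨ P t s then 0 else W s t) := by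
      conv_rhs => rw [Finset.sum_comm]
      rw [← Finset.sum_neg_distrib]
      refine Finset.sum_congr rfl fun s hs => ?_
      rw [← Finset.sum_neg_distrib]
      refine Finset.sum_congr rfl fun t ht => ?_
      by_cases c1 : P s t <;> by_cases c2 : P t s <;> simp [c1, c2]
      exact h1 s hs t ht c1 c2
    have h2 : (2 : ℝ) • ∑ s ∈ S, ∑ t ∈ S, (if P s t ∨ P t s then 0 else W s t) = 0 := by
      rw [two_smul]
      nth_rewrite 1 [this]
      exact neg_add_cancel _
    exact (smul_eq_zero.1 h2).resolve_left two_ne_zero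
  rw [Finset.sum_congr rfl fun s hs => Finset.sum_congr rfl fun t ht => e s hs t ht]
  simp only [Finset.sum_add_distrib]
  rw [e1, zero_add, Finset.sum_comm]
  refine Finset.sum_eq_zero fun t ht => ?_
  exact (Finset.sum_filter _ _).symm.trans (h3 t ht)

namespace OddXGraph

lemma degX_app {g : OddXGraph} (hg : g.Nonzero) {o : Op} (ho : o ∈ g.ops) :
    (g.app o).degX = g.degX + 1 ∧ (g.app o).ordX = g.ordX := by
  rcases o with e | p | a
  · obtain ⟨he, hne, hreg, hs, ht⟩ := edge_props hg ho
    have hE : (g.contractEdge e).numEdges + 1 = g.numEdges := by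
      simp only [numEdges, contractEdge, Multiset.card_map]
      exact Multiset.card_erase_add_one he
    have hc : (g.contractEdge e).numCrosses = g.numCrosses := by
      simp [numCrosses, contractEdge]
    have hvi : (g.contractEdge e).vi + 1 = g.vi := by
      show g.vi - 1 + 1 = g.vi
      omega
    have hve : (g.contractEdge e).ve = g.ve := rfl
    show (g.contractEdge e).degX = _ ∧ (g.contractEdge e).ordX = _
    unfold degX ordX
    omega
  · obtain ⟨hi, hj, hne, h2⟩ := arc_props (mem_ops_arc.1 ho)
    have hE : (g.contractArc p.1 p.2).numEdges = g.numEdges := by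
      simp [numEdges, contractArc]
    have hc : (g.contractArc p.1 p.2).numCrosses = g.numCrosses := by
      simp [numCrosses, contractArc]
    have hvi : (g.contractArc p.1 p.2).vi = g.vi := rfl
    have hve : (g.contractArc p.1 p.2).ve + 1 = g.ve := by
      show g.ve - 1 + 1 = g.ve
      omega
    show (g.contractArc p.1 p.2).degX = _ ∧ (g.contractArc p.1 p.2).ordX = _
    unfold degX ordX
    omega
  · have ha := mem_ops_cross.1 ho
    have hE : (g.deleteCrossNat a).numEdges = g.numEdges + 1 := by
      simp [numEdges, deleteCrossNat]
    have hc : (g.deleteCrossNat a).numCrosses + 1 = g.numCrosses := by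
      simp only [numCrosses, deleteCrossNat, List.length_eraseIdx, if_pos ha]
      omega
    have hvi : (g.deleteCrossNat a).vi = g.vi := rfl
    have hve : (g.deleteCrossNat a).ve = g.ve := rfl
    show (g.deleteCrossNat a).degX = _ ∧ (g.deleteCrossNat a).ordX = _
    unfold degX ordX
    omega

/-- The place of `app g s` corresponding to a place of `g`. -/
def push : Op → Op → Op
  | Sum.inl e, o => opMap (mergeMap e.src e.tgt) o
  | Sum.inr (Sum.inl p), o => opMap (mergeMap p.1 p.2) o
  | Sum.inr (Sum.inr a), Sum.inr (Sum.inr b) => Sum.inr (Sum.inr (if b < a then b else b - 1))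
  | Sum.inr (Sum.inr _), o => o

/-- The places `t` of `g` which still exist after the action at `s`. -/
def Surv (g : OddXGraph) : Op → Op → Prop
  | Sum.inl e, Sum.inl f => e ≠ f ∧
      ¬(mergeMap e.src e.tgt f.src < g.ve ∧ mergeMap e.src e.tgt f.tgt < g.ve)
  | Sum.inr (Sum.inl p), Sum.inr (Sum.inl q) => mergeMap p.1 p.2 q.1 ≠ mergeMap p.1 p.2 q.2
  | Sum.inr (Sum.inr a), Sum.inr (Sum.inr b) => a ≠ b
  | _, _ => True

lemma contractEdge_edges (g : OddXGraph) (e : OEdge) :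
    (g.contractEdge e).edges = (g.edges.erase e).map (emap (mergeMap e.src e.tgt)) := rfl

lemma contractArc_edges (g : OddXGraph) (i j : ℕ) :
    (g.contractArc i j).edges = g.edges.map (arcEdgeMap i j) := rfl

lemma mergeMap_lt_iff_of_regular {n i j : ℕ} (h : ¬(i < n ∧ j < n)) (v : ℕ) :
    mergeMap i j v < n ↔ v < n ∨ (min i j < n ∧ (v = i ∨ v = j)) := by
  unfold mergeMap
  split_ifs <;> omega

lemma mergeMap_lt_iff_of_external {n i j : ℕ} (hij : i ≠ j) (hi : i < n) (hj : j < n) (v : ℕ) :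
    mergeMap i j v < n - 1 ↔ v < n := by
  unfold mergeMap
  split_ifs <;> omega

lemma mergeMap_arc {g : OddXGraph} {p : ℕ × ℕ} {i j : ℕ} (h : ¬(i < g.ve ∧ j < g.ve))
    (hp : p ∈ g.arcs) : (mergeMap i j p.1, mergeMap i j p.2) = p := by
  obtain ⟨h1, h2, -⟩ := arc_props hp
  rw [mergeMap_of_lt_max (by omega), mergeMap_of_lt_max (by omega)]

lemma exists_arc_mergeMap {g : OddXGraph} {p q : ℕ × ℕ} (hp : p ∈ g.arcs)
    (hq : (q.1 + 1 < g.ve - 1 ∧ q.2 = q.1 + 1) ∨ (2 ≤ g.ve - 1 ∧ q.1 = g.ve - 1 - 1 ∧ q.2 = 0)) :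
    ∃ t ∈ g.arcs, (mergeMap p.1 p.2 t.1, mergeMap p.1 p.2 t.2) = q := by
  obtain ⟨i, j⟩ := p
  obtain ⟨a, b⟩ := q
  simp only [mem_arcs] at hp hq ⊢
  have key : ∀ c d, ((c + 1 < g.ve ∧ d = c + 1) ∨ (2 ≤ g.ve ∧ c = g.ve - 1 ∧ d = 0)) →
      mergeMap i j c = a → mergeMap i j d = b → ∃ t : ℕ × ℕ,
      ((t.1 + 1 < g.ve ∧ t.2 = t.1 + 1) ∨ (2 ≤ g.ve ∧ t.1 = g.ve - 1 ∧ t.2 = 0)) ∧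
      (mergeMap i j t.1, mergeMap i j t.2) = (a, b) :=
    fun c d h1 h2 h3 => ⟨(c, d), h1, by rw [h2, h3]⟩
  by_cases hc : b = 0
  · by_cases hj : j = 0
    · refine key (g.ve - 2) (g.ve - 1) (by omega) ?_ ?_ <;> unfold mergeMap <;>
        split_ifs <;> omega
    · refine key (g.ve - 1) 0 (by omega) ?_ ?_ <;> unfold mergeMap <;> split_ifs <;> omega
  · by_cases ha : j = 0 ∨ a < i
    · refine key a b (by omega) ?_ ?_ <;> unfold mergeMap <;> split_ifs <;> omega
    · refine key (a + 1) (b + 1) (by omega) ?_ ?_ <;> unfold mergeMap <;> split_ifs <;> omega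

lemma push_mem {g : OddXGraph} (hg : g.Nonzero) {s t : Op} (hs : s ∈ g.ops) (ht : t ∈ g.ops)
    (hst : g.Surv s t) : push s t ∈ (g.app s).ops := by
  rcases s with e | p | a
  · obtain ⟨he, hne, hreg, -⟩ := edge_props hg hs
    rcases t with f | q | b
    · obtain ⟨hf, hfne, hfreg, -⟩ := edge_props hg ht
      have hfe := (Multiset.mem_erase_of_ne hst.1.symm).2 hf
      refine mem_ops_edge.2 ⟨Multiset.mem_map_of_mem (emap _) hfe, fun h => ?_, hst.2⟩
      have := not_par hg he hfe
      unfold Par at this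
      have h : mergeMap e.src e.tgt f.src = mergeMap e.src e.tgt f.tgt := h
      rw [mergeMap_eq_iff hne] at h
      tauto
    · have hq := mem_ops_arc.1 ht
      exact mem_ops_arc.2 (by rw [mergeMap_arc hreg hq]; exact hq)
    · have hb := mem_ops_cross.1 ht
      exact mem_ops_cross.2 (by simpa [app, contractEdge] using hb)
  · have hp := mem_ops_arc.1 hs
    obtain ⟨hi, hj, hne, h2⟩ := arc_props hp
    rcases t with f | q | b
    · obtain ⟨hf, hfne, hfreg, -⟩ := edge_props hg ht
      refine mem_ops_edge.2 ⟨?_, fun h => ?_, fun h => ?_⟩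
      · rw [← arcEdgeMap_eq (by omega) (by omega)]
        exact Multiset.mem_map_of_mem (arcEdgeMap _ _) hf
      · have h : mergeMap p.1 p.2 f.src = mergeMap p.1 p.2 f.tgt := h
        rw [mergeMap_eq_iff hne] at h
        omega
      · have h : mergeMap p.1 p.2 f.src < g.ve - 1 ∧ mergeMap p.1 p.2 f.tgt < g.ve - 1 := h
        rw [mergeMap_lt_iff_of_external hne hi hj, mergeMap_lt_iff_of_external hne hi hj] at h
        exact hfreg h
    · have hq := mem_ops_arc.1 ht
      refine mem_ops_arc.2 ?_
      have hst : mergeMap p.1 p.2 q.1 ≠ mergeMap p.1 p.2 q.2 := hst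
      rw [mem_arcs] at hq hp ⊢
      show (mergeMap p.1 p.2 q.1 + 1 < g.ve - 1 ∧ mergeMap p.1 p.2 q.2 = mergeMap p.1 p.2 q.1 + 1)
        ∨ (2 ≤ g.ve - 1 ∧ mergeMap p.1 p.2 q.1 = g.ve - 1 - 1 ∧ mergeMap p.1 p.2 q.2 = 0)
      rw [Ne, mergeMap_eq_iff hne] at hst
      unfold mergeMap
      split_ifs <;> omega
    · have hb := mem_ops_cross.1 ht
      exact mem_ops_cross.2 (by simpa [app, contractArc] using hb)
  · have ha := mem_ops_cross.1 hs
    rcases t with f | q | b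
    · obtain ⟨hf, hfreg⟩ := mem_ops_edge.1 ht
      exact mem_ops_edge.2 ⟨Multiset.mem_cons_of_mem hf, hfreg⟩
    · exact mem_ops_arc.2 (show q ∈ g.arcs from mem_ops_arc.1 ht)
    · have hb := mem_ops_cross.1 ht
      have hst : a ≠ b := hst
      refine mem_ops_cross.2 ?_
      simp only [app, deleteCrossNat, List.length_eraseIdx, if_pos ha]
      split_ifs <;> omega

lemma push_injOn {g : OddXGraph} (hg : g.Nonzero) {s : Op} (hs : s ∈ g.ops)
    (hN : (g.app s).Nonzero) {t u : Op} (ht : t ∈ g.ops) (hu : u ∈ g.ops)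
    (hst : g.Surv s t) (hsu : g.Surv s u) (h : push s t = push s u) : t = u := by
  have hnd := hN.nodup
  rcases s with e | p | a
  · obtain ⟨he, hne, hreg, -⟩ := edge_props hg hs
    rcases t with f | q | b <;> rcases u with f' | q' | b' <;>
      simp only [push, opMap, Sum.inl.injEq, Sum.inr.injEq, reduceCtorEq] at h
    · have hfe := (Multiset.mem_erase_of_ne hst.1.symm).2 (mem_ops_edge.1 ht).1
      have hfe' := (Multiset.mem_erase_of_ne hsu.1.symm).2 (mem_ops_edge.1 hu).1
      exact congrArg _ (Multiset.inj_on_of_nodup_map hnd f hfe f' hfe' h)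
    · rw [mergeMap_arc hreg (mem_ops_arc.1 ht), mergeMap_arc hreg (mem_ops_arc.1 hu)] at h
      rw [h]
    · rw [h]
  · have hp := mem_ops_arc.1 hs
    obtain ⟨hi, hj, hne, h2⟩ := arc_props hp
    rcases t with f | q | b <;> rcases u with f' | q' | b' <;>
      simp only [push, opMap, Sum.inl.injEq, Sum.inr.injEq, reduceCtorEq] at h
    · obtain ⟨hf, hfne, hfreg, -⟩ := edge_props hg ht
      obtain ⟨hf', hfne', hfreg', -⟩ := edge_props hg hu
      rw [← arcEdgeMap_eq (by omega) (by omega), ← arcEdgeMap_eq (by omega) (by omega)] at h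
      exact congrArg _ (Multiset.inj_on_of_nodup_map hnd f hf f' hf' h)
    · have hq := mem_ops_arc.1 ht
      have hq' := mem_ops_arc.1 hu
      have hst : mergeMap p.1 p.2 q.1 ≠ mergeMap p.1 p.2 q.2 := hst
      have hsu : mergeMap p.1 p.2 q'.1 ≠ mergeMap p.1 p.2 q'.2 := hsu
      rw [mem_arcs] at hq hq' hp
      rw [Ne, mergeMap_eq_iff hne] at hst hsu
      rw [Prod.mk.injEq, mergeMap_eq_iff hne, mergeMap_eq_iff hne] at h
      have : q = q' := by
        apply Prod.ext <;> omega
      rw [this]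
    · rw [h]
  · have ha := mem_ops_cross.1 hs
    rcases t with f | q | b <;> rcases u with f' | q' | b' <;>
      simp only [push, Sum.inl.injEq, Sum.inr.injEq, reduceCtorEq] at h
    · rw [h]
    · rw [h]
    · have hst : a ≠ b := hst
      have hsu : a ≠ b' := hsu
      have : b = b' := by split_ifs at h <;> omega
      rw [this]

lemma push_surjOn {g : OddXGraph} (hg : g.Nonzero) {s u : Op} (hs : s ∈ g.ops)
    (hu : u ∈ (g.app s).ops) : ∃ t ∈ g.ops, g.Surv s t ∧ push s t = u := by
  rcases s with e | p | a
  · obtain ⟨he, hne, hreg, -⟩ := edge_props hg hs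
    rcases u with f | q | b
    · obtain ⟨hf, hf1, hf2⟩ := mem_ops_edge.1 hu
      obtain ⟨f', hf', rfl⟩ := Multiset.mem_map.1 hf
      refine ⟨Sum.inl f', mem_ops_edge.2 ⟨Multiset.mem_of_mem_erase hf',
        fun h => hf1 (congrArg (mergeMap e.src e.tgt) h), fun h => hf2 ?_⟩, ⟨?_, hf2⟩, rfl⟩
      · exact ⟨(mergeMap_le _ _ _).trans_lt h.1, (mergeMap_le _ _ _).trans_lt h.2⟩
      · rintro rfl
        exact hg.nodup.notMem_erase hf'
    · have hq : q ∈ (g.contractEdge e).arcs := mem_ops_arc.1 hu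
      have hq : q ∈ g.arcs := hq
      refine ⟨Sum.inr (Sum.inl q), mem_ops_arc.2 hq, trivial, ?_⟩
      simp only [push, opMap]
      rw [mergeMap_arc hreg hq]
    · refine ⟨Sum.inr (Sum.inr b), mem_ops_cross.2 ?_, trivial, rfl⟩
      have := mem_ops_cross.1 hu
      simpa [app, contractEdge] using this
  · have hp := mem_ops_arc.1 hs
    obtain ⟨hi, hj, hne, h2⟩ := arc_props hp
    rcases u with f | q | b
    · obtain ⟨hf, hf1, hf2⟩ := mem_ops_edge.1 hu
      obtain ⟨f', hf', rfl⟩ := Multiset.mem_map.1 hf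
      change ¬_ = _ at hf1
      change ¬(_ < g.ve - 1 ∧ _ < g.ve - 1) at hf2
      have e1 := arcEdgeMap_src p.1 p.2 f'
      have e2 := arcEdgeMap_tgt p.1 p.2 f'
      have hfr : ¬(f'.src < g.ve ∧ f'.tgt < g.ve) := by
        rw [← mergeMap_lt_iff_of_external hne hi hj, ← mergeMap_lt_iff_of_external hne hi hj]
        rwa [← e1, ← e2]
      refine ⟨Sum.inl f', mem_ops_edge.2 ⟨hf', fun h => hf1 ?_, hfr⟩, trivial, ?_⟩
      · exact e1.trans ((congrArg _ h).trans e2.symm)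
      · exact congrArg Sum.inl (arcEdgeMap_eq (by omega) (by omega)).symm
    · have hq : q ∈ (g.contractArc p.1 p.2).arcs := mem_ops_arc.1 hu
      rw [mem_arcs] at hq
      change (_ < g.ve - 1 ∧ _) ∨ (2 ≤ g.ve - 1 ∧ _ = g.ve - 1 - 1 ∧ _) at hq
      obtain ⟨t, ht, h⟩ := exists_arc_mergeMap hp hq
      refine ⟨Sum.inr (Sum.inl t), mem_ops_arc.2 ht, ?_, congrArg (Sum.inr ∘ Sum.inl) h⟩
      obtain ⟨h3, h4⟩ := Prod.mk.injEq _ _ _ _ ▸ h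
      show mergeMap _ _ _ ≠ mergeMap _ _ _
      omega
    · refine ⟨Sum.inr (Sum.inr b), mem_ops_cross.2 ?_, trivial, rfl⟩
      have := mem_ops_cross.1 hu
      simpa [app, contractArc] using this
  · have ha := mem_ops_cross.1 hs
    rcases u with f | q | b
    · obtain ⟨hf, hf1, hf2⟩ := mem_ops_edge.1 hu
      refine ⟨Sum.inl f, mem_ops_edge.2 ⟨?_, hf1, hf2⟩, trivial, rfl⟩
      rcases Multiset.mem_cons.1 (show f ∈ _ ::ₘ g.edges from hf) with rfl | h
      · exact absurd rfl hf1
      · exact h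
    · have hq : q ∈ (g.deleteCrossNat a).arcs := mem_ops_arc.1 hu
      have hq : q ∈ g.arcs := hq
      exact ⟨Sum.inr (Sum.inl q), mem_ops_arc.2 hq, trivial, rfl⟩
    · have hb := mem_ops_cross.1 hu
      simp only [app, deleteCrossNat, List.length_eraseIdx, if_pos ha] at hb
      refine ⟨Sum.inr (Sum.inr (if b < a then b else b + 1)), mem_ops_cross.2 ?_, ?_, ?_⟩
      · split_ifs <;> omega
      · show a ≠ _
        split_ifs <;> omega
      · simp only [push, Sum.inr.injEq]
        split_ifs <;> omega

/-- The graph resulting from the successive actions at the places `s` and `t`. -/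
def app₂ (g : OddXGraph) (s t : Op) : OddXGraph := (g.app s).app (push s t)

/-- The sign of the successive actions at the places `s` and `t`. -/
noncomputable def sgn₂ (g : OddXGraph) (s t : Op) : ℝ := g.sgn s * (g.app s).sgn (push s t)

/-- The edge `s` becomes parallel to another edge when the arc `t` is contracted. -/
def Exceptional (g : OddXGraph) : Op → Op → Prop
  | Sum.inl e, Sum.inr (Sum.inl p) =>
    ∃ h ∈ g.edges.erase e, Par (emap (mergeMap p.1 p.2) e) (emap (mergeMap p.1 p.2) h)
  | _, _ => False

lemma surv_comm {g : OddXGraph} (hg : g.Nonzero) {s t : Op} (hs : s ∈ g.ops) (ht : t ∈ g.ops)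
    (h : g.Surv s t) : g.Surv t s := by
  rcases s with e | p | a <;> rcases t with f | q | b <;> try trivial
  · obtain ⟨he, hne, hreg, -⟩ := edge_props hg hs
    obtain ⟨hf, hfne, hfreg, -⟩ := edge_props hg ht
    obtain ⟨h1, h2⟩ := h
    refine ⟨h1.symm, ?_⟩
    rw [mergeMap_lt_iff_of_regular hreg, mergeMap_lt_iff_of_regular hreg] at h2
    rw [mergeMap_lt_iff_of_regular hfreg, mergeMap_lt_iff_of_regular hfreg]
    omega
  · obtain ⟨-, -, hp, -⟩ := arc_props (mem_ops_arc.1 hs)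
    obtain ⟨-, -, hq, -⟩ := arc_props (mem_ops_arc.1 ht)
    exact mergeMap_swap_ne hp hq h
  · exact Ne.symm (show a ≠ b from h)

lemma bool_ite_congr {a b c d a' b' c' d' : Prop} [Decidable a] [Decidable b] [Decidable c]
    [Decidable d] [Decidable a'] [Decidable b'] [Decidable c'] [Decidable d'] (x : Bool)
    (h1 : c → ¬b) (h2 : c' → ¬b') (h3 : a ∨ c ↔ a' ∨ c') (h4 : b ∨ d ↔ b' ∨ d') :
    (if a then false else if b then true else if c then false else if d then true else x) =
      if a' then false else if b' then true else if c' then false else if d' then true else x := by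
  have key : ∀ {a b c d : Prop} [Decidable a] [Decidable b] [Decidable c] [Decidable d],
      (c → ¬b) → (if a then false else if b then true else if c then false else
        if d then true else x) = if a ∨ c then false else if b ∨ d then true else x := by
    intro a b c d _ _ _ _ h
    by_cases a <;> by_cases b <;> by_cases c <;> simp_all
  rw [key h1, key h2]
  simp only [h3, h4]

lemma OEdge_ext {e f : OEdge} (h1 : e.src = f.src) (h2 : e.tgt = f.tgt) (h3 : e.lp = f.lp) :
    e = f := by
  cases e
  cases f
  simp_all

lemma arcEdgeMap_lp (i j : ℕ) (f : OEdge) : (arcEdgeMap i j f).lp =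
    if f.src = i ∧ f.tgt = j then false else if f.src = j ∧ f.tgt = i then true else f.lp := by
  unfold arcEdgeMap
  split_ifs <;> rfl

lemma arcEdgeMap_arcEdgeMap {i j k l : ℕ} (hij : i ≠ j) (hkl : k ≠ l)
    (h : mergeMap i j k ≠ mergeMap i j l) (hik : i ≠ k) (hjl : j ≠ l) (f : OEdge) :
    arcEdgeMap (mergeMap i j k) (mergeMap i j l) (arcEdgeMap i j f) =
      arcEdgeMap (mergeMap k l i) (mergeMap k l j) (arcEdgeMap k l f) := by
  have hs : ∀ v, _ := mergeMap_mergeMap hij hkl h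
  refine OEdge_ext ?_ ?_ ?_
  · simp only [arcEdgeMap_src, hs]
  · simp only [arcEdgeMap_tgt, hs]
  · simp only [arcEdgeMap_lp, arcEdgeMap_src, arcEdgeMap_tgt]
    rw [Ne, mergeMap_eq_iff hij] at h
    simp only [mergeMap_eq_iff hij, mergeMap_eq_iff hkl]
    generalize f.src = a
    generalize f.tgt = b
    refine bool_ite_congr _ (fun hc => ?_) (fun hc => ?_) ⟨fun hc => ?_, fun hc => ?_⟩
      ⟨fun hc => ?_, fun hc => ?_⟩ <;> clear hs <;> grind

lemma arcEdgeMap_emap_mergeMap {g : OddXGraph} {e f : OEdge} {i j : ℕ} (hij : i ≠ j)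
    (hi : i < g.ve) (hj : j < g.ve) (hreg : g.isRegular e)
    (h : ¬Par (emap (mergeMap i j) e) (emap (mergeMap i j) f)) :
    arcEdgeMap (mergeMap e.src e.tgt i) (mergeMap e.src e.tgt j) (emap (mergeMap e.src e.tgt) f) =
      emap (mergeMap (mergeMap i j e.src) (mergeMap i j e.tgt)) (arcEdgeMap i j f) := by
  obtain ⟨hne, hreg⟩ := hreg
  have hne' : mergeMap e.src e.tgt i ≠ mergeMap e.src e.tgt j := by
    rw [Ne, mergeMap_eq_iff hne]
    omega
  have hs : ∀ v, _ := mergeMap_mergeMap hne hij hne'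
  refine OEdge_ext ?_ ?_ ?_
  · simp only [arcEdgeMap_src, emap, hs]
  · simp only [arcEdgeMap_tgt, emap, hs]
  · unfold Par at h
    simp only [emap, mergeMap_eq_iff hij] at h
    simp only [arcEdgeMap_lp, emap, mergeMap_eq_iff hne]
    generalize f.src = a at *
    generalize f.tgt = b at *
    generalize e.src = c at *
    generalize e.tgt = d at *
    generalize g.ve = n at *
    have h0 : ¬(c = i ∧ d = j) := by omega
    have h0' : ¬(c = j ∧ d = i) := by omega
    clear hreg hi hj hs
    congr 1
    · apply propext; constructor <;> grind
    · congr 1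
      apply propext; constructor <;> grind
/-- The two successive actions at `s` and `t` commute up to a sign. -/
def Anticommute (g : OddXGraph) (s t : Op) : Prop :=
  g.app₂ s t = g.app₂ t s ∧ g.sgn₂ s t = -g.sgn₂ t s

lemma Anticommute.symm {g : OddXGraph} {s t : Op} (h : g.Anticommute s t) :
    g.Anticommute t s := ⟨h.1.symm, by rw [h.2, neg_neg]⟩

lemma anticommute_edge_edge {g : OddXGraph} (hg : g.Nonzero) {e f : OEdge}
    (hs : Sum.inl e ∈ g.ops) (ht : Sum.inl f ∈ g.ops) (h : g.Surv (Sum.inl e) (Sum.inl f)) :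
    g.Anticommute (Sum.inl e) (Sum.inl f) := by
  obtain ⟨he, hne, hreg, -⟩ := edge_props hg hs
  obtain ⟨hf, hfne, hfreg, -⟩ := edge_props hg ht
  have hm : mergeMap e.src e.tgt f.src ≠ mergeMap e.src e.tgt f.tgt :=
    (mem_ops_edge.1 (push_mem hg hs ht h)).2.1
  have hv := mergeMap_mergeMap hne hfne hm
  refine ⟨eq_of_components rfl rfl ?_ ?_, csign_mul_csign hne hfne hm⟩
  · show (((g.edges.erase e).map (emap (mergeMap e.src e.tgt))).erase
        (emap (mergeMap e.src e.tgt) f)).map (emap (mergeMap _ _)) =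
      (((g.edges.erase f).map (emap (mergeMap f.src f.tgt))).erase
        (emap (mergeMap f.src f.tgt) e)).map (emap (mergeMap _ _))
    rw [← Multiset.map_erase_of_mem _ _ ((Multiset.mem_erase_of_ne h.1.symm).2 hf),
      ← Multiset.map_erase_of_mem _ _ ((Multiset.mem_erase_of_ne h.1).2 he),
      Multiset.erase_comm, Multiset.map_map, Multiset.map_map]
    refine Multiset.map_congr rfl fun x _ => ?_
    simp only [Function.comp_apply, emap, hv]
  · show (g.crosses.map _).map _ = (g.crosses.map _).map _
    rw [List.map_map, List.map_map]
    exact List.map_congr_left fun x _ => hv x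

lemma anticommute_arc_arc {g : OddXGraph} {p q : ℕ × ℕ}
    (hs : p ∈ g.arcs) (ht : q ∈ g.arcs) (h : mergeMap p.1 p.2 q.1 ≠ mergeMap p.1 p.2 q.2) :
    g.Anticommute (Sum.inr (Sum.inl p)) (Sum.inr (Sum.inl q)) := by
  obtain ⟨-, -, hp, -⟩ := arc_props hs
  obtain ⟨-, -, hq, -⟩ := arc_props ht
  have hv := mergeMap_mergeMap hp hq h
  have hpq : p.1 ≠ q.1 ∧ p.2 ≠ q.2 := by
    rw [Ne, mergeMap_eq_iff hp] at h
    rw [mem_arcs] at hs ht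
    omega
  refine ⟨eq_of_components rfl rfl ?_ ?_, csign_mul_csign hp hq h⟩
  · show (g.edges.map (arcEdgeMap _ _)).map (arcEdgeMap _ _) =
      (g.edges.map (arcEdgeMap _ _)).map (arcEdgeMap _ _)
    rw [Multiset.map_map, Multiset.map_map]
    exact Multiset.map_congr rfl fun x _ => arcEdgeMap_arcEdgeMap hp hq h hpq.1 hpq.2 x
  · show (g.crosses.map _).map _ = (g.crosses.map _).map _
    rw [List.map_map, List.map_map]
    exact List.map_congr_left fun x _ => hv x

lemma anticommute_edge_arc {g : OddXGraph} (hg : g.Nonzero) {e : OEdge} {p : ℕ × ℕ}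
    (hs : Sum.inl e ∈ g.ops) (ht : Sum.inr (Sum.inl p) ∈ g.ops)
    (h : ¬g.Exceptional (Sum.inl e) (Sum.inr (Sum.inl p))) :
    g.Anticommute (Sum.inl e) (Sum.inr (Sum.inl p)) := by
  obtain ⟨he, hne, hreg, -⟩ := edge_props hg hs
  obtain ⟨hi, hj, hp, -⟩ := arc_props (mem_ops_arc.1 ht)
  have hm : mergeMap e.src e.tgt p.1 ≠ mergeMap e.src e.tgt p.2 := by
    rw [Ne, mergeMap_eq_iff hne]
    omega
  have hv := mergeMap_mergeMap hne hp hm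
  have hE : ∀ f ∈ g.edges.erase e, ¬Par (emap (mergeMap p.1 p.2) e) (emap (mergeMap p.1 p.2) f) :=
    fun f hf hP => h ⟨f, hf, hP⟩
  refine ⟨eq_of_components rfl rfl ?_ ?_, csign_mul_csign hne hp hm⟩
  · show ((g.edges.erase e).map (emap (mergeMap e.src e.tgt))).map (arcEdgeMap _ _) =
      ((g.edges.map (arcEdgeMap p.1 p.2)).erase (emap (mergeMap p.1 p.2) e)).map
        (emap (mergeMap _ _))
    rw [← arcEdgeMap_eq (by omega) (by omega), ← Multiset.map_erase_of_mem _ _ he,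
      Multiset.map_map, Multiset.map_map]
    refine Multiset.map_congr rfl fun x hx => ?_
    rw [Function.comp_apply, Function.comp_apply, arcEdgeMap_src, arcEdgeMap_tgt]
    exact arcEdgeMap_emap_mergeMap hp hi hj ⟨hne, hreg⟩ (hE x hx)
  · show (g.crosses.map _).map _ = (g.crosses.map _).map _
    rw [List.map_map, List.map_map]
    exact List.map_congr_left fun x _ => hv x

lemma mul_neg_one_zpow (c : ℝ) (n a : ℤ) :
    c * (-1) ^ (n + 1 + a + 1) = -((-1) ^ (n + a + 1) * c) := by
  rw [show n + 1 + a + 1 = n + a + 1 + 1 by ring, neg_one_zpow_add_one]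
  ring

lemma anticommute_edge_cross {g : OddXGraph} (hg : g.Nonzero) {e : OEdge} {a : ℕ}
    (hs : Sum.inl e ∈ g.ops) (ht : Sum.inr (Sum.inr a) ∈ g.ops) :
    g.Anticommute (Sum.inl e) (Sum.inr (Sum.inr a)) := by
  obtain ⟨he, hne, hreg, -⟩ := edge_props hg hs
  have ha := mem_ops_cross.1 ht
  refine ⟨eq_of_components rfl rfl ?_ ?_, ?_⟩
  · show (⟨(g.crosses.map (mergeMap e.src e.tgt))[a]?.getD 0, (g.crosses.map _)[a]?.getD 0,
        false⟩ : OEdge) ::ₘ (g.edges.erase e).map (emap _) =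
      ((⟨g.crosses[a]?.getD 0, g.crosses[a]?.getD 0, false⟩ ::ₘ g.edges).erase e).map (emap _)
    rw [Multiset.erase_cons_tail _ (by rintro rfl; exact hne rfl), Multiset.map_cons]
    simp [ha, emap]
  · exact List.eraseIdx_map _ _ _
  · show csign _ _ * (-1) ^ ((g.app (Sum.inl e)).degX + _ + 1) = -(_ * csign _ _)
    rw [(degX_app hg hs).1]
    exact mul_neg_one_zpow _ _ _

lemma anticommute_arc_cross {g : OddXGraph} (hg : g.Nonzero) {p : ℕ × ℕ} {a : ℕ}
    (hs : Sum.inr (Sum.inl p) ∈ g.ops) (ht : Sum.inr (Sum.inr a) ∈ g.ops) :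
    g.Anticommute (Sum.inr (Sum.inl p)) (Sum.inr (Sum.inr a)) := by
  obtain ⟨hi, hj, hp, -⟩ := arc_props (mem_ops_arc.1 hs)
  have ha := mem_ops_cross.1 ht
  refine ⟨eq_of_components rfl rfl ?_ ?_, ?_⟩
  · show (⟨(g.crosses.map (mergeMap p.1 p.2))[a]?.getD 0, (g.crosses.map _)[a]?.getD 0,
        false⟩ : OEdge) ::ₘ g.edges.map (arcEdgeMap p.1 p.2) =
      (⟨g.crosses[a]?.getD 0, g.crosses[a]?.getD 0, false⟩ ::ₘ g.edges).map (arcEdgeMap p.1 p.2)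
    rw [Multiset.map_cons, arcEdgeMap_eq (by simp only; omega) (by simp only; omega)]
    simp [ha, emap]
  · exact List.eraseIdx_map _ _ _
  · show csign _ _ * (-1) ^ ((g.app (Sum.inr (Sum.inl p))).degX + _ + 1) = -(_ * csign _ _)
    rw [(degX_app hg hs).1]
    exact mul_neg_one_zpow _ _ _

lemma anticommute_cross_cross {g : OddXGraph} (hg : g.Nonzero) {a b : ℕ}
    (hs : Sum.inr (Sum.inr a) ∈ g.ops) (ht : Sum.inr (Sum.inr b) ∈ g.ops) (h : a ≠ b) :
    g.Anticommute (Sum.inr (Sum.inr a)) (Sum.inr (Sum.inr b)) := by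
  wlog hab : a < b generalizing a b
  · exact (this ht hs h.symm (by omega)).symm
  have e1 : push (Sum.inr (Sum.inr a)) (Sum.inr (Sum.inr b)) = Sum.inr (Sum.inr (b - 1)) := by
    simp only [push, if_neg (show ¬b < a by omega)]
  have e2 : push (Sum.inr (Sum.inr b)) (Sum.inr (Sum.inr a)) = Sum.inr (Sum.inr a) := by
    simp only [push, if_pos hab]
  unfold Anticommute app₂ sgn₂
  rw [e1, e2]
  have h1 : (g.crosses.eraseIdx a)[b - 1]? = g.crosses[b]? := by
    rw [List.getElem?_eraseIdx, if_neg (by omega), Nat.sub_add_cancel (by omega)]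
  have h2 : (g.crosses.eraseIdx b)[a]? = g.crosses[a]? := by
    rw [List.getElem?_eraseIdx, if_pos hab]
  refine ⟨eq_of_components rfl rfl ?_ ?_, ?_⟩
  · simp only [app, deleteCrossNat, h1, h2]
    rw [Multiset.cons_swap]
  · show (g.crosses.eraseIdx a).eraseIdx (b - 1) = (g.crosses.eraseIdx b).eraseIdx a
    apply List.ext_getElem?
    intro n
    simp only [List.getElem?_eraseIdx]
    split_ifs <;> first | rfl | omega
  · show _ * (-1) ^ ((g.app (Sum.inr (Sum.inr a))).degX + _ + 1) =
      -(_ * (-1) ^ ((g.app (Sum.inr (Sum.inr b))).degX + _ + 1))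
    rw [(degX_app hg hs).1, (degX_app hg ht).1]
    have : ((b - 1 : ℕ) : ℤ) = b - 1 := by omega
    simp only [sgn]
    rw [this, ← zpow_add₀ (by norm_num), ← zpow_add₀ (by norm_num), ← neg_one_zpow_add_one,
      show g.degX + (b : ℤ) + 1 + (g.degX + 1 + a + 1) + 1 =
        g.degX + a + 1 + (g.degX + 1 + (b - 1) + 1) + 1 + 1 by ring, neg_one_zpow_add_one,
      neg_one_zpow_add_one, neg_neg]

lemma anticommute {g : OddXGraph} (hg : g.Nonzero) {s t : Op} (hs : s ∈ g.ops) (ht : t ∈ g.ops)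
    (h : g.Surv s t) (h1 : ¬g.Exceptional s t) (h2 : ¬g.Exceptional t s) : g.Anticommute s t := by
  rcases s with e | p | a <;> rcases t with f | q | b
  · exact anticommute_edge_edge hg hs ht h
  · exact anticommute_edge_arc hg hs ht h1
  · exact anticommute_edge_cross hg hs ht
  · exact (anticommute_edge_arc hg ht hs h2).symm
  · exact anticommute_arc_arc (mem_ops_arc.1 hs) (mem_ops_arc.1 ht) h
  · exact anticommute_arc_cross hg hs ht
  · exact (anticommute_edge_cross hg ht hs).symm
  · exact (anticommute_arc_cross hg ht hs).symm
  · exact anticommute_cross_cross hg hs ht h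

/-- The contribution of the successive actions at `s` and `t`. -/
noncomputable def term₂ (g : OddXGraph) (s t : Op) : DoX :=
  if g.Surv s t then g.sgn₂ s t • cls (g.app₂ s t) else 0

lemma sgn_smul_cob_app {g : OddXGraph} (hg : g.Nonzero) {s : Op} (hs : s ∈ g.ops) :
    g.sgn s • cob (g.app s) =
      ∑ t ∈ g.ops, if (g.app s).Nonzero then g.term₂ s t else 0 := by
  by_cases hN : (g.app s).Nonzero
  · simp only [if_pos hN, cob, term₂]
    rw [← Finset.sum_filter, Finset.smul_sum]
    symm
    refine Finset.sum_bij (fun t _ => push s t) ?_ ?_ ?_ ?_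
    · intro t ht
      obtain ⟨ht, hst⟩ := Finset.mem_filter.1 ht
      exact push_mem hg hs ht hst
    · intro t ht u hu h
      obtain ⟨ht, hst⟩ := Finset.mem_filter.1 ht
      obtain ⟨hu, hsu⟩ := Finset.mem_filter.1 hu
      exact push_injOn hg hs hN ht hu hst hsu h
    · intro u hu
      obtain ⟨t, ht, hst, h⟩ := push_surjOn hg hs hu
      exact ⟨t, Finset.mem_filter.2 ⟨ht, hst⟩, h⟩
    · intro t _
      rw [sgn₂, mul_smul]
      rfl
  · simp [hN, cob]

lemma Par.emap {f : ℕ → ℕ} {a b : OEdge} (h : Par a b) : Par (emap f a) (emap f b) := by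
  obtain ⟨h1, h2⟩ | ⟨h1, h2⟩ := h <;> simp [Par, OddXGraph.emap, h1, h2]

lemma par_arcEdgeMap {i j : ℕ} {a b : OEdge} :
    Par (arcEdgeMap i j a) (arcEdgeMap i j b) ↔
      Par (OddXGraph.emap (mergeMap i j) a) (OddXGraph.emap (mergeMap i j) b) := by
  simp only [Par, arcEdgeMap_src, arcEdgeMap_tgt, OddXGraph.emap]

lemma dbl_app {g : OddXGraph} (h : Dbl g.edges) (o : Op) :
    Dbl (g.app o).edges ∨ ∃ f b, o = Sum.inl f ∧ b ∈ g.edges.erase f ∧ Par f b := by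
  obtain ⟨a, ha, b, hb, hab⟩ := id h
  rcases o with f | p | c
  · by_cases haf : a = f
    · exact Or.inr ⟨f, b, rfl, haf ▸ hb, haf ▸ hab⟩
    · by_cases hbf : b = f
      · exact Or.inr ⟨f, a, rfl, (Multiset.mem_erase_of_ne haf).2 ha, hbf ▸ hab.symm⟩
      · refine Or.inl (dbl_map ((Multiset.mem_erase_of_ne haf).2 ha) ?_ hab.emap)
        rw [Multiset.erase_comm]
        exact (Multiset.mem_erase_of_ne hbf).2 hb
  · exact Or.inl (dbl_map ha hb (par_arcEdgeMap.2 hab.emap))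
  · exact Or.inl (dbl_mono (Multiset.le_cons_self _ _) h)

lemma dbl_app₂ {g : OddXGraph} (hg : g.Nonzero) {s t : Op} (hs : s ∈ g.ops) (ht : t ∈ g.ops)
    (hst : g.Surv s t) (hex : ¬g.Exceptional t s) (h : Dbl (g.app s).edges) :
    Dbl (g.app₂ s t).edges ∨ Dbl (g.app t).edges := by
  refine (dbl_app h (push s t)).imp_right ?_
  rintro ⟨f', b, hf', hb, hP⟩
  rcases t with f | q | c
  · obtain ⟨hf, hfne, hfreg, -⟩ := edge_props hg ht
    rcases s with e | p | a
    · obtain ⟨he, hne, hreg, -⟩ := edge_props hg hs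
      cases hf'
      have hfe := (Multiset.mem_erase_of_ne hst.1.symm).2 hf
      have hef := (Multiset.mem_erase_of_ne hst.1).2 he
      change b ∈ ((g.edges.erase e).map (emap _)).erase (emap _ f) at hb
      rw [← Multiset.map_erase_of_mem _ _ hfe] at hb
      obtain ⟨h, hh, rfl⟩ := Multiset.mem_map.1 hb
      have hh' := hh
      rw [Multiset.erase_comm] at hh'
      refine dbl_map hef hh' ?_
      have h1 := not_par hg he hfe
      have h2 := not_par hg he (Multiset.mem_of_mem_erase hh)
      have h3 := not_par hg hf (Multiset.mem_of_mem_erase hh')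
      unfold Par at *
      simp only [emap, mergeMap_eq_iff hne, mergeMap_eq_iff hfne] at hP ⊢
      clear hst hex hreg hfreg
      grind
    · cases hf'
      obtain ⟨hi, hj, hp, -⟩ := arc_props (mem_ops_arc.1 hs)
      change b ∈ (g.edges.map (arcEdgeMap _ _)).erase (emap _ f) at hb
      rw [← arcEdgeMap_eq (by omega) (by omega), ← Multiset.map_erase_of_mem _ _ hf] at hb
      obtain ⟨h, hh, rfl⟩ := Multiset.mem_map.1 hb
      refine absurd ⟨h, hh, ?_⟩ hex
      rw [← par_arcEdgeMap, arcEdgeMap_eq (f := f) (by omega) (by omega)]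
      exact hP
    · cases hf'
      change b ∈ (_ ::ₘ g.edges).erase f' at hb
      rw [Multiset.erase_cons_tail _ (by rintro rfl; exact hfne rfl), Multiset.mem_cons] at hb
      rcases hb with rfl | hb
      · unfold Par at hP
        simp only at hP
        omega
      · exact absurd hP (not_par hg hf hb)
  · rcases s with _ | _ | _ <;> cases hf'
  · rcases s with _ | _ | _ <;> cases hf'

lemma cls_eq_zero_of_dbl {g : OddXGraph} (h : Dbl g.edges) : cls g = 0 :=
  cls_eq_zero fun hN => hN.2.1 h

lemma dbl_of_not_nonzero {g : OddXGraph} (hg : g.Nonzero) {s : Op} (hs : s ∈ g.ops)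
    (h : ¬(g.app s).Nonzero) : Dbl (g.app s).edges := by
  rw [nonzero_app_iff hg hs] at h
  exact not_not.1 h

lemma term₂_antisymm {g : OddXGraph} (hg : g.Nonzero) {s t : Op} (hs : s ∈ g.ops)
    (ht : t ∈ g.ops) (h1 : ¬g.Exceptional s t) (h2 : ¬g.Exceptional t s) :
    (if (g.app s).Nonzero then g.term₂ s t else 0) =
      -(if (g.app t).Nonzero then g.term₂ t s else 0) := by
  by_cases hst : g.Surv s t
  · have hts := surv_comm hg hs ht hst
    have key : g.term₂ s t = -g.term₂ t s := by
      obtain ⟨e1, e2⟩ := anticommute hg hs ht hst h1 h2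
      rw [term₂, term₂, if_pos hst, if_pos hts, e1, e2, neg_smul]
    have van : ∀ {s t}, s ∈ g.ops → t ∈ g.ops → g.Surv s t → ¬g.Exceptional t s →
        ¬(g.app s).Nonzero → g.term₂ s t = 0 ∨ ¬(g.app t).Nonzero := by
      intro s t hs ht hst h2 hN
      rcases dbl_app₂ hg hs ht hst h2 (dbl_of_not_nonzero hg hs hN) with h | h
      · left
        rw [term₂, cls_eq_zero_of_dbl h, smul_zero, ite_self]
      · exact Or.inr fun hN => hN.2.1 h
    by_cases c1 : (g.app s).Nonzero <;> by_cases c2 : (g.app t).Nonzero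
    · rw [if_pos c1, if_pos c2, key]
    · rcases van ht hs hts h1 c2 with h | h
      · rw [if_pos c1, if_neg c2, key, h]
      · exact absurd c1 h
    · rcases van hs ht hst h2 c1 with h | h
      · rw [if_neg c1, if_pos c2, ← key, h]
      · exact absurd c2 h
    · rw [if_neg c1, if_neg c2, neg_zero]
  · have hts : ¬g.Surv t s := fun h => hst (surv_comm hg ht hs h)
    simp [term₂, hst, hts]

lemma not_nonzero_of_exceptional {g : OddXGraph} (hg : g.Nonzero) {s t : Op} (hs : s ∈ g.ops)
    (h : g.Exceptional s t) : ¬(g.app t).Nonzero := by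
  rcases s with e | p | a <;> rcases t with f | q | b <;> try exact h.elim
  obtain ⟨k, hk, hP⟩ := h
  exact fun hN => hN.2.1 (dbl_map (edge_props hg hs).1 hk (par_arcEdgeMap.2 hP))

/-- The vertices `a` and `y` are the end-points of the edge `e`. -/
def HasEnds (e : OEdge) (a y : ℕ) : Prop := (e.src = a ∧ e.tgt = y) ∨ (e.src = y ∧ e.tgt = a)

lemma HasEnds.mergeMap_eq {e : OEdge} {a y : ℕ} (h : HasEnds e a y) :
    mergeMap e.src e.tgt = mergeMap a y := by
  funext v
  rcases h with ⟨h1, h2⟩ | ⟨h1, h2⟩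
  · rw [h1, h2]
  · rw [h1, h2, mergeMap_comm]

lemma exists_ends {n i j : ℕ} {e h : OEdge} (hij : i ≠ j) (hi : i < n) (hj : j < n)
    (he : e.src ≠ e.tgt) (hreg : ¬(e.src < n ∧ e.tgt < n)) (hpar : ¬Par e h)
    (hP : Par (emap (mergeMap i j) e) (emap (mergeMap i j) h)) :
    ∃ a b y, ((a = i ∧ b = j) ∨ (a = j ∧ b = i)) ∧ n ≤ y ∧ HasEnds e a y ∧ HasEnds h b y := by
  unfold Par at *
  simp only [emap, mergeMap_eq_iff hij] at hP
  have key : ∀ a b y, ((a = i ∧ b = j) ∨ (a = j ∧ b = i)) → n ≤ y → HasEnds e a y →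
      HasEnds h b y → ∃ a b y, ((a = i ∧ b = j) ∨ (a = j ∧ b = i)) ∧ n ≤ y ∧ HasEnds e a y ∧
        HasEnds h b y := fun a b y h1 h2 h3 h4 => ⟨a, b, y, h1, h2, h3, h4⟩
  have h1 : (e.src = i ∨ e.src = j) ∨ (e.tgt = i ∨ e.tgt = j) := by grind
  rcases h1 with (h1 | h1) | (h1 | h1)
  · refine key i j e.tgt (by omega) (by omega) (by unfold HasEnds; omega) ?_
    unfold HasEnds; grind
  · refine key j i e.tgt (by omega) (by omega) (by unfold HasEnds; omega) ?_
    unfold HasEnds; grind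
  · refine key i j e.src (by omega) (by omega) (by unfold HasEnds; omega) ?_
    unfold HasEnds; grind
  · refine key j i e.src (by omega) (by omega) (by unfold HasEnds; omega) ?_
    unfold HasEnds; grind

lemma arcEdgeMap_emap_eq {n i j a b y : ℕ} {e h x : OEdge} (hi : i < n) (hj : j < n)
    (hab : (a = i ∧ b = j) ∨ (a = j ∧ b = i)) (hy : n ≤ y) (he : HasEnds e a y)
    (hh : HasEnds h b y) (hex : ¬Par e x) (hhx : ¬Par h x) :
    arcEdgeMap i j (emap (mergeMap a y) x) = arcEdgeMap i j (emap (mergeMap b y) x) := by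
  have hm : ∀ v, mergeMap i j (mergeMap a y v) = mergeMap i j (mergeMap b y v) := by
    intro v
    by_cases hv : v = y
    · rw [hv, mergeMap_right, mergeMap_right, min_eq_left (by omega), min_eq_left (by omega)]
      rcases hab with ⟨rfl, rfl⟩ | ⟨rfl, rfl⟩ <;> rw [mergeMap_left, mergeMap_right]
    · rw [mergeMap_of_lt (show a < y by omega), mergeMap_of_lt (show b < y by omega), if_neg hv,
        if_neg hv]
  refine OEdge_ext ?_ ?_ ?_
  · simp only [arcEdgeMap_src, emap, hm]
  · simp only [arcEdgeMap_tgt, emap, hm]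
  · have key : ∀ v w, mergeMap a y v = w ↔ (v = y ∧ w = a) ∨ (v < y ∧ w = v) ∨
        (y < v ∧ w = v - 1) := by
      intro v w
      rw [mergeMap_of_lt (by omega)]
      split_ifs <;> omega
    have key' : ∀ v w, mergeMap b y v = w ↔ (v = y ∧ w = b) ∨ (v < y ∧ w = v) ∨
        (y < v ∧ w = v - 1) := by
      intro v w
      rw [mergeMap_of_lt (by omega)]
      split_ifs <;> omega
    simp only [arcEdgeMap_lp, emap, key, key']
    unfold HasEnds at *
    unfold Par at *
    generalize x.src = s at *
    generalize x.tgt = t at *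
    generalize e.src = e1 at *
    generalize e.tgt = e2 at *
    generalize h.src = h1 at *
    generalize h.tgt = h2 at *
    clear key key' hm
    congr 1
    · apply propext; constructor <;> grind
    · congr 1
      apply propext; constructor <;> grind

lemma arcEdgeMap_emap_loop {n i j a b y : ℕ} {e h : OEdge} (hij : i ≠ j) (hi : i < n) (hj : j < n)
    (hab : (a = i ∧ b = j) ∨ (a = j ∧ b = i)) (hy : n ≤ y) (he : HasEnds e a y)
    (hh : HasEnds h b y) :
    (csign e.src e.tgt = csign h.src h.tgt ∧ arcEdgeMap i j (emap (mergeMap b y) e) =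
        flipOEdgeX (arcEdgeMap i j (emap (mergeMap a y) h))) ∨
      (csign e.src e.tgt = -csign h.src h.tgt ∧ arcEdgeMap i j (emap (mergeMap b y) e) =
        arcEdgeMap i j (emap (mergeMap a y) h)) := by
  have m1 : mergeMap a y b = b := mergeMap_of_lt_max (by omega)
  have m2 : mergeMap b y a = a := mergeMap_of_lt_max (by omega)
  have m3 : mergeMap a y y = a := by rw [mergeMap_right]; omega
  have m4 : mergeMap b y y = b := by rw [mergeMap_right]; omega
  have c : ∀ a < n, csign a y = (-1) ^ (y + 1) ∧ csign y a = (-1) ^ y := by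
    intro a ha
    unfold csign
    rw [if_pos (by omega), if_neg (by omega)]
    exact ⟨rfl, rfl⟩
  obtain ⟨ca, ca'⟩ := c a (by omega)
  obtain ⟨cb, cb'⟩ := c b (by omega)
  have l1 : ∀ l, arcEdgeMap i j ⟨i, j, l⟩ = ⟨min i j, min i j, false⟩ := by simp [arcEdgeMap]
  have l2 : ∀ l, arcEdgeMap i j ⟨j, i, l⟩ = ⟨min i j, min i j, true⟩ := by
    simp [arcEdgeMap, hij, hij.symm]
  obtain ⟨e1, e2, el⟩ := e
  obtain ⟨h1, h2, hl⟩ := h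
  rcases he with ⟨rfl, rfl⟩ | ⟨rfl, rfl⟩ <;> rcases hh with ⟨rfl, h4⟩ | ⟨h4, rfl⟩ <;>
    (simp only at h4; subst h4) <;>
    simp only [emap, ca, ca', cb, cb', m1, m2, m3, m4] <;>
    rcases hab with ⟨rfl, rfl⟩ | ⟨rfl, rfl⟩ <;> simp [l1, l2, flipOEdgeX, pow_succ]

lemma app₂_edge_arc {g : OddXGraph} {e : OEdge} {p : ℕ × ℕ}
    (hreg : ¬(e.src < g.ve ∧ e.tgt < g.ve)) (hp : p ∈ g.arcs) :
    g.app₂ (Sum.inl e) (Sum.inr (Sum.inl p)) = (g.contractEdge e).contractArc p.1 p.2 ∧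
      g.sgn₂ (Sum.inl e) (Sum.inr (Sum.inl p)) = csign e.src e.tgt * csign p.1 p.2 := by
  have h : push (Sum.inl e) (Sum.inr (Sum.inl p)) = Sum.inr (Sum.inl p) :=
    congrArg (Sum.inr ∘ Sum.inl) (mergeMap_arc hreg hp)
  unfold app₂ sgn₂
  rw [h]
  exact ⟨rfl, rfl⟩

lemma exceptional_cancel {g : OddXGraph} (hg : g.Nonzero) {e h : OEdge} {p : ℕ × ℕ}
    (hs : Sum.inl e ∈ g.ops) (hs' : Sum.inl h ∈ g.ops) (hp : p ∈ g.arcs)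
    (hh : h ∈ g.edges.erase e)
    (hP : Par (emap (mergeMap p.1 p.2) e) (emap (mergeMap p.1 p.2) h)) :
    g.sgn₂ (Sum.inl e) (Sum.inr (Sum.inl p)) • cls (g.app₂ (Sum.inl e) (Sum.inr (Sum.inl p))) +
      g.sgn₂ (Sum.inl h) (Sum.inr (Sum.inl p)) •
        cls (g.app₂ (Sum.inl h) (Sum.inr (Sum.inl p))) = 0 := by
  obtain ⟨hi, hj, hij, -⟩ := arc_props hp
  obtain ⟨he, hne, hreg, -⟩ := edge_props hg hs
  obtain ⟨hh1, hne', hreg', -⟩ := edge_props hg hs'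
  obtain ⟨e1, s1⟩ := app₂_edge_arc hreg hp
  obtain ⟨e2, s2⟩ := app₂_edge_arc hreg' hp
  obtain ⟨a, b, y, hab, hy, hea, hhb⟩ := exists_ends hij hi hj hne hreg (not_par hg he hh) hP
  rw [e1, e2, s1, s2]
  have heh : e ∈ g.edges.erase h := by
    refine (Multiset.mem_erase_of_ne ?_).2 he
    rintro rfl
    exact hg.nodup.notMem_erase hh
  have E1 : ((g.contractEdge e).contractArc p.1 p.2).edges =
      arcEdgeMap p.1 p.2 (emap (mergeMap a y) h) ::ₘ
        ((g.edges.erase e).erase h).map (arcEdgeMap p.1 p.2 ∘ emap (mergeMap a y)) := by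
    rw [contractArc_edges, contractEdge_edges, hea.mergeMap_eq, Multiset.map_map]
    conv_lhs => rw [← Multiset.cons_erase hh]
    rw [Multiset.map_cons, Function.comp_apply]
  have E2 : ((g.contractEdge h).contractArc p.1 p.2).edges =
      arcEdgeMap p.1 p.2 (emap (mergeMap b y) e) ::ₘ
        ((g.edges.erase e).erase h).map (arcEdgeMap p.1 p.2 ∘ emap (mergeMap a y)) := by
    rw [contractArc_edges, contractEdge_edges, hhb.mergeMap_eq, Multiset.map_map]
    conv_lhs => rw [← Multiset.cons_erase heh]
    rw [Multiset.map_cons, Function.comp_apply, Multiset.erase_comm]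
    congr 1
    refine Multiset.map_congr rfl fun x hx => ?_
    refine (arcEdgeMap_emap_eq hi hj hab hy hea hhb
      (not_par hg he (Multiset.mem_of_mem_erase hx)) (not_par hg hh1 ?_)).symm
    rw [Multiset.erase_comm] at hx
    exact Multiset.mem_of_mem_erase hx
  have C : ((g.contractEdge h).contractArc p.1 p.2).crosses =
      ((g.contractEdge e).contractArc p.1 p.2).crosses := by
    show (g.crosses.map _).map _ = (g.crosses.map _).map _
    congr 1
    refine List.map_congr_left fun c hc => ?_
    have := hg.1.2.2.2.2.1 c hc
    rw [hea.mergeMap_eq, hhb.mergeMap_eq, mergeMap_of_lt_max (by omega),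
      mergeMap_of_lt_max (by omega)]
  rcases arcEdgeMap_emap_loop hij hi hj hab hy hea hhb with ⟨c1, c2⟩ | ⟨c1, c2⟩
  · have hF : FlipAt (arcEdgeMap p.1 p.2 (emap (mergeMap a y) h))
        ((g.contractEdge e).contractArc p.1 p.2) ((g.contractEdge h).contractArc p.1 p.2) :=
      ⟨rfl, rfl, ⟨_, E1, by rw [E2, c2]⟩, C⟩
    rw [hF.cls_eq, c1]
    simp
  · have hF : (g.contractEdge e).contractArc p.1 p.2 = (g.contractEdge h).contractArc p.1 p.2 :=
      eq_of_components rfl rfl (by rw [E1, E2, c2]) C.symm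
    rw [hF, c1]
    simp

/-- Two distinct edges of `g`, regarded as places, which become parallel under the contraction
of the arc from `i` to `j`. -/
def Partners (g : OddXGraph) (i j : ℕ) (s u : Op) : Prop :=
  ∃ e h, s = Sum.inl e ∧ u = Sum.inl h ∧ e ∈ g.edges ∧ h ∈ g.edges.erase e ∧
    Par (emap (mergeMap i j) e) (emap (mergeMap i j) h)

lemma Partners.ne {g : OddXGraph} (hg : g.Nonzero) {i j : ℕ} {s u : Op}
    (h : g.Partners i j s u) : s ≠ u := by
  obtain ⟨e, h, rfl, rfl, he, hh, -⟩ := h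
  rintro heq
  cases heq
  exact hg.nodup.notMem_erase hh

lemma Partners.symm {g : OddXGraph} (hg : g.Nonzero) {i j : ℕ} {s u : Op}
    (h : g.Partners i j s u) : g.Partners i j u s := by
  have hne := h.ne hg
  obtain ⟨e, h, rfl, rfl, he, hh, hP⟩ := h
  refine ⟨h, e, rfl, rfl, Multiset.mem_of_mem_erase hh, (Multiset.mem_erase_of_ne ?_).2 he, hP.symm⟩
  rintro rfl
  exact hne rfl

lemma Partners.mem {g : OddXGraph} (hg : g.Nonzero) {p : ℕ × ℕ} (hp : p ∈ g.arcs) {s u : Op}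
    (hs : s ∈ g.ops) (h : g.Partners p.1 p.2 s u) : u ∈ g.ops := by
  obtain ⟨hi, hj, hij, -⟩ := arc_props hp
  obtain ⟨e, h, rfl, rfl, he, hh, hP⟩ := h
  obtain ⟨he, hne, hreg, -⟩ := edge_props hg hs
  obtain ⟨a, b, y, hab, hy, -, hhb⟩ := exists_ends hij hi hj hne hreg (not_par hg he hh) hP
  unfold HasEnds at hhb
  exact mem_ops_edge.2 ⟨Multiset.mem_of_mem_erase hh, by omega, by omega⟩

lemma Partners.unique {g : OddXGraph} (hg : g.Nonzero) {p : ℕ × ℕ} (hp : p ∈ g.arcs) {s u u' : Op}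
    (hs : s ∈ g.ops) (h : g.Partners p.1 p.2 s u) (h' : g.Partners p.1 p.2 s u') : u = u' := by
  obtain ⟨hi, hj, hij, -⟩ := arc_props hp
  obtain ⟨e, h, rfl, rfl, he, hh, hP⟩ := h
  obtain ⟨e', h', heq, rfl, he', hh', hP'⟩ := h'
  cases heq
  obtain ⟨he, hne, hreg, -⟩ := edge_props hg hs
  obtain ⟨a, b, y, hab, hy, hea, hhb⟩ := exists_ends hij hi hj hne hreg (not_par hg he hh) hP
  obtain ⟨a', b', y', hab', hy', hea', hhb'⟩ :=
    exists_ends hij hi hj hne hreg (not_par hg he hh') hP'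
  by_contra hne2
  refine not_par hg (Multiset.mem_of_mem_erase hh) ((Multiset.mem_erase_of_ne ?_).2
    (Multiset.mem_of_mem_erase hh')) (f := h') ?_
  · rintro rfl
    exact hne2 rfl
  · unfold HasEnds at *
    unfold Par
    omega

lemma term₂_edge_arc {g : OddXGraph} (hg : g.Nonzero) {e : OEdge} {p : ℕ × ℕ}
    (hs : Sum.inl e ∈ g.ops) :
    (if (g.app (Sum.inl e)).Nonzero then g.term₂ (Sum.inl e) (Sum.inr (Sum.inl p)) else 0) =
      g.sgn₂ (Sum.inl e) (Sum.inr (Sum.inl p)) •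
        cls (g.app₂ (Sum.inl e) (Sum.inr (Sum.inl p))) := by
  split_ifs with h
  · rw [term₂, if_pos (show g.Surv (Sum.inl e) (Sum.inr (Sum.inl p)) from trivial)]
  · rcases dbl_app (dbl_of_not_nonzero hg hs h) (push (Sum.inl e) (Sum.inr (Sum.inl p))) with
      h | ⟨f, b, hf, -⟩
    · rw [app₂, cls_eq_zero_of_dbl h, smul_zero]
    · cases hf

lemma sum_exceptional {g : OddXGraph} (hg : g.Nonzero) {t : Op} (ht : t ∈ g.ops) :
    ∑ s ∈ g.ops.filter (fun s => g.Exceptional s t),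
      (if (g.app s).Nonzero then g.term₂ s t else 0) = 0 := by
  have trivial_case : (∀ s, ¬g.Exceptional s t) →
      ∑ s ∈ g.ops.filter (fun s => g.Exceptional s t),
        (if (g.app s).Nonzero then g.term₂ s t else 0) = 0 := by
    intro h
    rw [Finset.filter_false_of_mem fun s _ => h s, Finset.sum_empty]
  rcases t with f | p | a
  · exact trivial_case fun s => by rcases s with _ | _ | _ <;> exact id
  · have hp := mem_ops_arc.1 ht
    have hex : ∀ s ∈ g.ops.filter (fun s => g.Exceptional s (Sum.inr (Sum.inl p))),
        ∃ u, g.Partners p.1 p.2 s u := by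
      intro s hs
      obtain ⟨hs, h⟩ := Finset.mem_filter.1 hs
      rcases s with e | _ | _
      · obtain ⟨h, hh, hP⟩ := h
        exact ⟨_, e, h, rfl, rfl, (edge_props hg hs).1, hh, hP⟩
      · exact h.elim
      · exact h.elim
    choose u hu using hex
    have hmem : ∀ s hs, u s hs ∈
        g.ops.filter (fun s => g.Exceptional s (Sum.inr (Sum.inl p))) := by
      intro s hs
      refine Finset.mem_filter.2 ⟨(hu s hs).mem hg hp (Finset.mem_filter.1 hs).1, ?_⟩
      obtain ⟨h, e, h1, -, -, hh, hP⟩ := (hu s hs).symm hg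
      rw [h1]
      exact ⟨e, hh, hP⟩
    refine Finset.sum_involution u ?_ ?_ hmem ?_
    · intro s hs
      have hs1 := (Finset.mem_filter.1 hs).1
      have hs2 := (hu s hs).mem hg hp hs1
      obtain ⟨e, h, h1, h2, he, hh, hP⟩ := hu s hs
      rw [h2] at hs2 ⊢
      subst h1
      rw [term₂_edge_arc hg hs1, term₂_edge_arc hg hs2]
      exact exceptional_cancel hg hs1 hs2 hp hh hP
    · exact fun s hs _ => ((hu s hs).ne hg).symm
    · intro s hs
      exact Partners.unique hg hp (Finset.mem_filter.1 (hmem s hs)).1 (hu _ (hmem s hs))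
        ((hu s hs).symm hg)
  · exact trivial_case fun s => by rcases s with _ | _ | _ <;> exact id

/-- The square of the coboundary vanishes on generators. -/
lemma sum_sgn_smul_cob {g : OddXGraph} (hg : g.Nonzero) :
    ∑ s ∈ g.ops, g.sgn s • cob (g.app s) = 0 := by
  rw [Finset.sum_congr rfl fun s hs => sgn_smul_cob_app hg hs]
  refine sum_sum_eq_zero_of_antisymm _ (fun s t => if (g.app s).Nonzero then g.term₂ s t else 0)
    g.Exceptional ?_ ?_ ?_
  · exact fun s hs t ht h1 h2 => term₂_antisymm hg hs ht h1 h2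
  · exact fun s hs t _ h => if_neg (not_nonzero_of_exceptional hg hs h)
  · exact fun t ht => sum_exceptional hg ht

lemma cob_eq_zero {g : OddXGraph} (hg : ¬g.Nonzero) : cob g = 0 := if_neg hg

/-- The coboundary, as a linear map on the free module on the extended graphs. -/
noncomputable def cobFree : (OddXGraph →₀ ℝ) →ₗ[ℝ] DoX := Finsupp.linearCombination ℝ cob

lemma cobFree_single (g : OddXGraph) (r : ℝ) : cobFree (Finsupp.single g r) = r • cob g :=
  Finsupp.linearCombination_single ℝ r g

lemma oddXRelations_le_ker : oddXRelations ≤ LinearMap.ker cobFree := by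
  refine Submodule.span_le.2 ?_
  rintro x (((⟨g, hg, rfl⟩ | ⟨g, hg, rfl⟩) | ⟨g, hg, rfl⟩) | ⟨g, g', ε, h, rfl⟩) <;>
    refine LinearMap.mem_ker.2 ?_
  · rw [cobFree_single, cob_eq_zero fun h : g.Nonzero => hg h.1, smul_zero]
  · rw [cobFree_single, cob_eq_zero fun h : g.Nonzero => h.2.1 hg, smul_zero]
  · rw [cobFree_single, cob_eq_zero fun h : g.Nonzero => h.2.2 hg, smul_zero]
  · rw [map_sub, map_smul, cobFree_single, cobFree_single, cob_eq_smul h, one_smul, one_smul,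
      sub_self]

/-- The coboundary, as a linear map on the extended odd graph complex. -/
noncomputable def coboundary : DoX →ₗ[ℝ] DoX := oddXRelations.liftQ cobFree oddXRelations_le_ker

lemma coboundary_cls (g : OddXGraph) : coboundary (cls g) = cob g :=
  (cobFree_single g 1).trans (one_smul ℝ _)

lemma coboundary_cob (g : OddXGraph) : coboundary (cob g) = 0 := by
  by_cases hg : g.Nonzero
  · rw [cob, if_pos hg, map_sum, ← sum_sgn_smul_cob hg]
    simp only [map_smul, coboundary_cls]
  · rw [cob, if_neg hg, map_zero]

lemma coboundary_comp_coboundary : coboundary ∘ₗ coboundary = 0 := by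
  refine Submodule.linearMap_qext _ (Finsupp.lhom_ext' fun g => LinearMap.ext_ring ?_)
  show coboundary (coboundary (cls g)) = 0
  rw [coboundary_cls, coboundary_cob]

lemma cob_mem_oddXPiece (g : OddXGraph) : cob g ∈ oddXPiece g.ordX (g.degX + 1) := by
  unfold cob
  split_ifs with hg
  · refine Submodule.sum_mem _ fun o ho => Submodule.smul_mem _ _ (Submodule.subset_span ?_)
    exact ⟨_, (app_valid hg ho).1, (degX_app hg ho).2, (degX_app hg ho).1, rfl⟩
  · exact Submodule.zero_mem _

end OddXGraph

/-- The operator `δ̃` on the extended odd graph complex is well defined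
on the quotient `D̃_o` (i.e. it descends through the sign relations, which is the
existence of the linear operator `δ` below together with the first property), it
satisfies `δ̃ ∘ δ̃ = 0`, and it raises the extended degree by `1` while leaving the
extended order unchanged: `δ̃ : D̃_o^{k,m} → D̃_o^{k,m+1}`. -/
theorem extended_odd_graph_complex_coboundary :
    ∃ δ : DoX →ₗ[ℝ] DoX,
      (∀ g : OddXGraph,
        δ (Submodule.Quotient.mk (p := oddXRelations) (Finsupp.single g 1)) =
          Submodule.Quotient.mk (p := oddXRelations) (deltaXGen g)) ∧
      (∀ x : DoX, δ (δ x) = 0) ∧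
      (∀ k m : ℤ, (oddXPiece k m).map δ ≤ oddXPiece k (m + 1)) := by
  refine ⟨OddXGraph.coboundary, fun g => ?_, fun x => ?_, fun k m => ?_⟩
  · rw [OddXGraph.mk_deltaXGen]
    exact OddXGraph.coboundary_cls g
  · exact LinearMap.congr_fun OddXGraph.coboundary_comp_coboundary x
  · rw [oddXPiece, Submodule.map_span_le]
    rintro x ⟨g, -, rfl, rfl, rfl⟩
    exact (OddXGraph.coboundary_cls g).symm ▸ OddXGraph.cob_mem_oddXPiece g
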